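/- arXiv:1706.03306 — 2 statements merged into one kernel-verified Lean document; each statement's English description precedes it below -/
import Mathlib

section
/- For all integers r, k, e with r ≥ k+1 ≥ e ≥ 3, one has f_r(n, e(r−k)+k+1, e) = o(n^k); that is, for every real ε > 0 there exists N such that for all integers n ≥ N, f_r(n, e(r−k)+k+1, e) ≤ ε·n^k. -/
open Finset

/-- A hypergraph `H` is `G_r(v,e)`-free if any `e` distinct edges span at least `v+1` vertices. -/
def GFree {V : Type*} [DecidableEq V] (H : Finset (Finset V)) (v e : ℕ) : Prop :=
  ∀ S ⊆ H, S.card = e → v + 1 ≤ (S.biUnion id).card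

/-- `extremalF r n v e` is the maximum number of edges of a `G_r(v,e)`-free `r`-uniform
hypergraph on `n` vertices. -/
noncomputable def extremalF (r n v e : ℕ) : ℕ :=
  sSup {m : ℕ | ∃ H : Finset (Finset (Fin n)),
    (∀ A ∈ H, A.card = r) ∧ GFree H v e ∧ H.card = m}

/-!
Choose an injective `(k + 1)`-tuple in every edge, and let `D` be the set of chosen tuples. Fewer
than `e` edges can contain `k` prescribed vertices, or contain `k` of `k + 1` prescribed vertices:
otherwise `e` of them would span at most `e * (r - k) + k + 1` vertices. Hence every axis-parallel
line meets `D` in at most `e` points. Moreover, if all `k + 1` facets of a simplex extend to tuples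
in `D`, then two of these tuples come from the same edge because `e ≤ k + 1`, and so the simplex
itself is in `D`. It remains to see that a set `D` with these two properties has `o(n ^ k)` points.

This is shown by an infinitary removal argument in the style of Tao and Austin. Sample vertices
`y (j, a)` for `j ≤ k` and `a : ℕ` independently, record which facets extend to tuples in `D`, and
let `n → ∞` along a sequence of counterexamples. Let `μ` be a weak limit of the laws of the
resulting `0`-`1` arrays and let `ν` be a weak limit of these laws conditioned on `y (·, 0) ∈ D`.
Then `μ` is invariant under relabelling in each coordinate, and since `D` has density at least
`δ / n` and at most `e` points on each line, `ν ≤ (e / δ) * μ` on the events which do not involve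
`y (i, 0)`. The event that all facets of `y (·, 0)` are present has `ν`-probability `1` and
`μ`-probability `0`. However, exchangeability makes the facet events conditionally independent
enough that the positivity of this probability passes from `ν` to `μ`, by induction on the set of
coordinates in which an index is allowed to be `0`.
-/

open MeasureTheory Filter Function
open scoped NNReal ProbabilityTheory symmDiff Topology

namespace BrownErdosSos

section Approximation

variable {Ω : Type*} {m0 : MeasurableSpace Ω}

theorem exists_measurableSet_measureReal_symmDiff_lt {ι : Type*} [SemilatticeSup ι] [Nonempty ι]
    (μ : Measure Ω) [IsFiniteMeasure μ] {F : ι → MeasurableSpace Ω} (hF : Monotone F)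
    (hle : ∀ n, F n ≤ m0) {A : Set Ω} (hA : MeasurableSet[⨆ n, F n] A) {δ : ℝ} (hδ : 0 < δ) :
    ∃ n S, MeasurableSet[F n] S ∧ μ.real (A ∆ S) < δ := by
  set C : Set (Set Ω) := ⋃ n, {S | MeasurableSet[F n] S} with hC
  have hmem {S : Set Ω} : S ∈ C ↔ ∃ n, MeasurableSet[F n] S := Set.mem_iUnion
  have hring : IsSetRing C := by
    refine ⟨hmem.2 ⟨Classical.arbitrary ι, @MeasurableSet.empty _ (F _)⟩, ?_, ?_⟩
    all_goals
      intro s t hs ht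
      obtain ⟨a, ha⟩ := hmem.1 hs
      obtain ⟨b, hb⟩ := hmem.1 ht
      have hs' := hF (le_sup_left : a ≤ a ⊔ b) s ha
      have ht' := hF (le_sup_right : b ≤ a ⊔ b) t hb
    · exact hmem.2 ⟨a ⊔ b, @MeasurableSet.union _ (F _) _ _ hs' ht'⟩
    · exact hmem.2 ⟨a ⊔ b, @MeasurableSet.diff _ (F _) _ _ hs' ht'⟩
  have hgen : ⨆ n, F n = MeasurableSpace.generateFrom C :=
    (MeasurableSpace.generateFrom_iUnion_measurableSet F).symm
  have hsup : ⨆ n, F n ≤ m0 := iSup_le hle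
  obtain ⟨S, hSC, hS⟩ := @exists_measure_symmDiff_lt_of_generateFrom_isSetRing _ (⨆ n, F n)
    (μ.trim hsup) _ C hring
    ⟨{Set.univ}, by simp, by simp [hC, @MeasurableSet.univ _ (F _)], by simp⟩ hgen A hA
    (ENNReal.ofReal δ) (by simpa using hδ)
  obtain ⟨n, hn⟩ := hmem.1 hSC
  refine ⟨n, S, hn, ?_⟩
  have hSsup : MeasurableSet[⨆ n, F n] S := le_iSup F n S hn
  rw [trim_measurableSet_eq hsup (@MeasurableSet.symmDiff _ (⨆ n, F n) _ _ hSsup hA),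
    symmDiff_comm] at hS
  exact ENNReal.toReal_lt_of_lt_ofReal hS

end Approximation

section Fibers

variable {Ω β : Type*} {m m0 : MeasurableSpace Ω} [mβ : MeasurableSpace β] {f : Ω → β}

theorem exists_measurableSet_preimage_singleton_inter_eq {S : Set Ω}
    (hS : MeasurableSet[m ⊔ mβ.comap f] S) (b : β) :
    ∃ s, MeasurableSet[m] s ∧ f ⁻¹' {b} ∩ S = f ⁻¹' {b} ∩ s := by
  have hconst : f ∘ ((↑) : f ⁻¹' {b} → Ω) = fun _ => b := funext fun ω => ω.2
  have hcomap : (m ⊔ mβ.comap f).comap ((↑) : f ⁻¹' {b} → Ω) =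
      m.comap ((↑) : f ⁻¹' {b} → Ω) := by
    rw [MeasurableSpace.comap_sup, MeasurableSpace.comap_comp, hconst,
      MeasurableSpace.comap_const, sup_bot_eq]
  have hS' : MeasurableSet[m.comap ((↑) : f ⁻¹' {b} → Ω)] ((↑) ⁻¹' S) := hcomap ▸ ⟨S, hS, rfl⟩
  obtain ⟨s, hs, hsS⟩ := hS'
  exact ⟨s, hs, (Subtype.preimage_val_eq_preimage_val_iff _ _ _).1 hsS.symm⟩

variable [MeasurableSingletonClass β] {μ : Measure Ω} [IsFiniteMeasure μ]

theorem sum_measureReal_preimage_singleton_inter [Fintype β] (hf : Measurable f) (X : Set Ω) :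
    ∑ b, μ.real (f ⁻¹' {b} ∩ X) = μ.real X := by
  have hfib (b : β) : MeasurableSet (f ⁻¹' {b}) := hf (measurableSet_singleton b)
  have h := sum_measureReal_preimage_singleton (μ := μ.restrict X) Finset.univ fun b _ => hfib b
  simpa [measureReal_restrict_apply (hfib _)] using h

theorem exists_measureReal_preimage_singleton_inter_pos [Finite β] (hf : Measurable f)
    {E : Set Ω} (hE : 0 < μ.real E) : ∃ b, 0 < μ.real (f ⁻¹' {b} ∩ E) := by
  have := Fintype.ofFinite β
  rw [← sum_measureReal_preimage_singleton_inter hf] at hE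
  obtain ⟨b, -, hb⟩ := Finset.exists_lt_of_sum_lt (f := fun _ => (0 : ℝ)) (by simpa using hE)
  exact ⟨b, hb⟩

end Fibers

section Intersections

variable {Ω ι : Type*} [Fintype ι] {m0 : MeasurableSpace Ω} {μ : Measure Ω} [IsFiniteMeasure μ]

theorem measureReal_iInter_pos {A : ι → Set Ω} {E : Set Ω} {θ : ℝ}
    (hA : ∀ i, MeasurableSet (A i)) (hE : 0 < μ.real E)
    (hAE : ∀ i, θ * μ.real E ≤ μ.real (A i ∩ E)) (hθ : Fintype.card ι * (1 - θ) < 1) :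
    0 < μ.real (⋂ i, A i) := by
  have hdiff (i : ι) : μ.real (E \ A i) ≤ (1 - θ) * μ.real E := by
    have h := measureReal_inter_add_sdiff (μ := μ) (s := E) (hA i)
    rw [Set.inter_comm] at h
    linarith [hAE i]
  have hcover : E ⊆ (⋂ i, A i) ∪ ⋃ i, E \ A i := by
    rw [← Set.sdiff_iInter, Set.union_sdiff_self]
    exact Set.subset_union_right
  have hunion : μ.real (⋃ i, E \ A i) ≤ Fintype.card ι * (1 - θ) * μ.real E :=
    calc μ.real (⋃ i, E \ A i) ≤ ∑ i, μ.real (E \ A i) := measureReal_iUnion_fintype_le _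
      _ ≤ ∑ _i : ι, (1 - θ) * μ.real E := Finset.sum_le_sum fun i _ => hdiff i
      _ = Fintype.card ι * (1 - θ) * μ.real E := by simp [mul_assoc]
  have hle := (measureReal_mono (μ := μ) hcover).trans (measureReal_union_le _ _)
  nlinarith

end Intersections

section ThinFibers

variable {Ω β : Type*} {m C D m0 : MeasurableSpace Ω} {μ : Measure Ω}

theorem setIntegral_condProb [IsFiniteMeasure μ] (hm : m ≤ m0) {S Q : Set Ω} (hS : MeasurableSet S)
    (hQ : MeasurableSet[m] Q) : ∫ ω in Q, (μ⟦S | m⟧) ω ∂μ = μ.real (S ∩ Q) := by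
  rw [setIntegral_condExp hm ((integrable_const (1 : ℝ)).indicator hS) hQ]
  exact (integral_indicator_one hS).trans (measureReal_restrict_apply hS)

/-- The points at which, conditionally on `m`, the event `A` occupies at most the proportion `θ` of
the fibre `f ⁻¹' {b}`. The inequality is cleared of denominators, so that points where the fibre has
conditional probability zero are included. -/
def thinSet {_ : MeasurableSpace Ω} (μ : Measure Ω) (m : MeasurableSpace Ω) (f : Ω → β)
    (A : Set Ω) (θ : ℝ) (b : β) : Set Ω :=
  {ω | (μ⟦A ∩ f ⁻¹' {b} | m⟧) ω ≤ θ * (μ⟦f ⁻¹' {b} | m⟧) ω}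

/-- The points lying in the `thinSet` of their own fibre of `f`. -/
def thinFibers {_ : MeasurableSpace Ω} (μ : Measure Ω) (m : MeasurableSpace Ω) (f : Ω → β)
    (A : Set Ω) (θ : ℝ) : Set Ω :=
  {ω | ω ∈ thinSet μ m f A θ (f ω)}

variable {f : Ω → β} {A S : Set Ω} {θ δ : ℝ}

theorem measurableSet_thinSet (b : β) : MeasurableSet[m] (thinSet μ m f A θ b) :=
  measurableSet_le stronglyMeasurable_condExp.measurable
    (stronglyMeasurable_condExp.measurable.const_mul θ)

theorem preimage_singleton_inter_thinFibers (b : β) :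
    f ⁻¹' {b} ∩ thinFibers μ m f A θ = f ⁻¹' {b} ∩ thinSet μ m f A θ b := by
  ext ω
  refine and_congr_right fun hω => ?_
  rw [← show f ω = b from hω]
  rfl

variable [mβ : MeasurableSpace β] [MeasurableSingletonClass β]

theorem measurableSet_thinFibers [Countable β] :
    MeasurableSet[m ⊔ mβ.comap f] (thinFibers μ m f A θ) := by
  have hfib : thinFibers μ m f A θ = ⋃ b, f ⁻¹' {b} ∩ thinSet μ m f A θ b := by
    simp only [← preimage_singleton_inter_thinFibers, ← Set.iUnion_inter, ← Set.preimage_iUnion,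
      Set.iUnion_of_singleton, Set.preimage_univ, Set.univ_inter]
  rw [hfib]
  refine @MeasurableSet.iUnion _ _ (m ⊔ mβ.comap f) _ _ fun b =>
    @MeasurableSet.inter _ (m ⊔ mβ.comap f) _ _ ?_ ?_
  · exact le_sup_right (a := m) _ ⟨{b}, measurableSet_singleton b, rfl⟩
  · exact le_sup_left (a := m) _ (measurableSet_thinSet b)

variable [IsFiniteMeasure μ]

theorem measureReal_inter_le_of_subset_thinSet (hm : m ≤ m0) (hf : Measurable f)
    (hA : MeasurableSet A) {b : β} {Q : Set Ω} (hQ : MeasurableSet[m] Q)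
    (hQb : Q ⊆ thinSet μ m f A θ b) :
    μ.real (A ∩ f ⁻¹' {b} ∩ Q) ≤ θ * μ.real (f ⁻¹' {b} ∩ Q) := by
  have hb : MeasurableSet (f ⁻¹' {b}) := hf (measurableSet_singleton b)
  rw [← setIntegral_condProb hm (hA.inter hb) hQ, ← setIntegral_condProb hm hb hQ,
    ← integral_const_mul]
  exact setIntegral_mono_on integrable_condExp.integrableOn
    (integrable_condExp.const_mul θ).integrableOn (hm _ hQ) fun ω hω => hQb hω

theorem mul_measureReal_lt_of_disjoint_thinSet (hD : D ≤ m0) (hf : Measurable f)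
    (hA : MeasurableSet A) {b : β}
    (hfib : μ⟦f ⁻¹' {b} | D⟧ =ᵐ[μ] μ⟦f ⁻¹' {b} | C⟧)
    (hAfib : μ⟦A ∩ f ⁻¹' {b} | D⟧ =ᵐ[μ] μ⟦A ∩ f ⁻¹' {b} | C⟧) {Q : Set Ω}
    (hQ : MeasurableSet[D] Q) (hQb : Disjoint Q (thinSet μ C f A θ b)) (hpos : 0 < μ.real Q) :
    θ * μ.real (f ⁻¹' {b} ∩ Q) < μ.real (A ∩ f ⁻¹' {b} ∩ Q) := by
  have hb : MeasurableSet (f ⁻¹' {b}) := hf (measurableSet_singleton b)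
  set g : Ω → ℝ := fun ω => (μ⟦A ∩ f ⁻¹' {b} | C⟧) ω - θ * (μ⟦f ⁻¹' {b} | C⟧) ω with hg
  have hgpos : ∀ ω ∈ Q, 0 < g ω := fun ω hω =>
    sub_pos.2 (not_le.1 (Set.disjoint_left.1 hQb hω))
  have hgint : ∫ ω in Q, g ω ∂μ =
      μ.real (A ∩ f ⁻¹' {b} ∩ Q) - θ * μ.real (f ⁻¹' {b} ∩ Q) := by
    rw [hg, integral_sub integrable_condExp.integrableOn
      (integrable_condExp.const_mul θ).integrableOn, integral_const_mul,
      ← setIntegral_condProb hD (hA.inter hb) hQ, ← setIntegral_condProb hD hb hQ,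
      integral_congr_ae (ae_restrict_of_ae hfib), integral_congr_ae (ae_restrict_of_ae hAfib)]
  rw [← sub_pos, ← hgint, setIntegral_pos_iff_support_of_nonneg_ae
    (ae_restrict_of_forall_mem (hD _ hQ) fun ω hω => (hgpos ω hω).le)
    (integrable_condExp.sub (integrable_condExp.const_mul θ)).integrableOn,
    Set.inter_eq_right.2 (show Q ⊆ support g from fun ω hω => (hgpos ω hω).ne')]
  exact (ENNReal.toReal_pos_iff.1 hpos).1

theorem measureReal_inter_thinFibers_inter_le [Finite β] (hm : m ≤ m0) (hf : Measurable f)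
    (hA : MeasurableSet A) (hS : MeasurableSet[m ⊔ mβ.comap f] S) :
    μ.real (A ∩ (thinFibers μ m f A θ ∩ S)) ≤ θ * μ.real (thinFibers μ m f A θ ∩ S) := by
  have := Fintype.ofFinite β
  rw [← sum_measureReal_preimage_singleton_inter hf,
    ← sum_measureReal_preimage_singleton_inter hf (thinFibers μ m f A θ ∩ S), Finset.mul_sum]
  refine Finset.sum_le_sum fun b _ => ?_
  obtain ⟨s, hs, hSs⟩ := exists_measurableSet_preimage_singleton_inter_eq hS b
  have hfib : f ⁻¹' {b} ∩ (thinFibers μ m f A θ ∩ S) =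
      f ⁻¹' {b} ∩ (thinSet μ m f A θ b ∩ s) := by
    rw [Set.inter_inter_distrib_left, hSs, preimage_singleton_inter_thinFibers,
      ← Set.inter_inter_distrib_left]
  rw [Set.inter_left_comm, hfib, ← Set.inter_assoc]
  exact measureReal_inter_le_of_subset_thinSet hm hf hA
    (@MeasurableSet.inter _ m _ _ (measurableSet_thinSet b) hs) Set.inter_subset_left

theorem eventually_measureReal_inter_thinFibers_le {β : ℕ → Type*} [∀ n, Finite (β n)]
    [∀ n, MeasurableSpace (β n)] [∀ n, MeasurableSingletonClass (β n)] {f : ∀ n, Ω → β n}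
    (hm : m ≤ m0) (hf : ∀ n, Measurable (f n))
    (hmono : Monotone fun n => m ⊔ MeasurableSpace.comap (f n) inferInstance)
    (hA : MeasurableSet[⨆ n, m ⊔ MeasurableSpace.comap (f n) inferInstance] A) (hθ : θ < 1)
    (hδ : 0 < δ) :
    ∀ᶠ n in atTop, μ.real (A ∩ thinFibers μ m (f n) A θ) ≤ δ := by
  have hle (n : ℕ) : m ⊔ MeasurableSpace.comap (f n) inferInstance ≤ m0 :=
    sup_le hm (hf n).comap_le
  have hθ' : 0 < 1 - θ := sub_pos.2 hθ
  obtain ⟨N, S, hS, hAS⟩ := exists_measurableSet_measureReal_symmDiff_lt μ hmono hle hA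
    (δ := δ / (1 / (1 - θ) + 1)) (by positivity)
  filter_upwards [eventually_ge_atTop N] with n hn
  set Z := thinFibers μ m (f n) A θ
  have hthin : μ.real (A ∩ (Z ∩ S)) ≤ θ * μ.real (Z ∩ S) :=
    measureReal_inter_thinFibers_inter_le hm (hf n) (iSup_le hle _ hA) (hmono hn _ hS)
  have hZS : μ.real (Z ∩ S) ≤ μ.real (A ∩ (Z ∩ S)) + μ.real (A ∆ S) := by
    refine (measureReal_mono fun ω hω => ?_).trans (measureReal_union_le _ _)
    by_cases h : ω ∈ A
    · exact Or.inl ⟨h, hω⟩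
    · exact Or.inr (Or.inr ⟨hω.2, h⟩)
  have hAZ : μ.real (A ∩ Z) ≤ μ.real (Z ∩ S) + μ.real (A ∆ S) := by
    refine (measureReal_mono fun ω hω => ?_).trans (measureReal_union_le _ _)
    by_cases h : ω ∈ S
    · exact Or.inl ⟨hω.2, h⟩
    · exact Or.inr (Or.inl ⟨hω.1, h⟩)
  have hZS' : μ.real (Z ∩ S) ≤ μ.real (A ∆ S) * (1 / (1 - θ)) := by
    rw [mul_one_div, le_div_iff₀ hθ']
    linarith
  rw [lt_div_iff₀ (by positivity)] at hAS
  linarith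

end ThinFibers

section CondExp

variable {Ω : Type*} {m C D m0 : MeasurableSpace Ω} {μ : Measure Ω} {f g : Ω → ℝ}

theorem integral_sub_mul_self (hf : MemLp f 2 μ) (hg : MemLp g 2 μ) :
    ∫ ω, (f ω - g ω) * (f ω - g ω) ∂μ =
      ∫ ω, f ω * f ω ∂μ - 2 * ∫ ω, f ω * g ω ∂μ + ∫ ω, g ω * g ω ∂μ := by
  have hff : Integrable (fun ω => f ω * f ω) μ := hf.integrable_mul hf
  have hfg : Integrable (fun ω => 2 * (f ω * g ω)) μ := (hf.integrable_mul hg).const_mul 2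
  have hgg : Integrable (fun ω => g ω * g ω) μ := hg.integrable_mul hg
  have hsub : Integrable (fun ω => f ω * f ω - 2 * (f ω * g ω)) μ := hff.sub hfg
  calc ∫ ω, (f ω - g ω) * (f ω - g ω) ∂μ
    _ = ∫ ω, (f ω * f ω - 2 * (f ω * g ω) + g ω * g ω) ∂μ := by congr with ω; ring
    _ = _ := by rw [integral_add hsub hgg, integral_sub hff hfg, integral_const_mul]

variable [IsFiniteMeasure μ]

theorem integral_condExp_mul (hm : m ≤ m0) (hf : MemLp f 2 μ) (hg : MemLp g 2 μ)
    (hgm : StronglyMeasurable[m] g) : ∫ ω, (μ[f | m]) ω * g ω ∂μ = ∫ ω, f ω * g ω ∂μ := by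
  have hpull : μ[f * g | m] =ᵐ[μ] μ[f | m] * g :=
    condExp_mul_of_stronglyMeasurable_right hgm (hf.integrable_mul hg)
      (hf.integrable one_le_two)
  exact (integral_congr_ae hpull).symm.trans (integral_condExp hm)

theorem condExp_ae_eq_of_integral_mul_self_le (hCD : C ≤ D) (hD : D ≤ m0) (hf : MemLp f 2 μ)
    (h : ∫ ω, (μ[f | D]) ω * (μ[f | D]) ω ∂μ ≤ ∫ ω, (μ[f | C]) ω * (μ[f | C]) ω ∂μ) :
    μ[f | D] =ᵐ[μ] μ[f | C] := by
  have hLD : MemLp (μ[f | D]) 2 μ := hf.condExp one_le_two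
  have hLC : MemLp (μ[f | C]) 2 μ := hf.condExp one_le_two
  have hcross : ∫ ω, (μ[f | D]) ω * (μ[f | C]) ω ∂μ = ∫ ω, (μ[f | C]) ω * (μ[f | C]) ω ∂μ :=
    (integral_condExp_mul hD hf hLC (stronglyMeasurable_condExp.mono hCD)).trans
      (integral_condExp_mul (hCD.trans hD) hf hLC stronglyMeasurable_condExp).symm
  have hnonneg (ω : Ω) : 0 ≤ ((μ[f | D]) ω - (μ[f | C]) ω) * ((μ[f | D]) ω - (μ[f | C]) ω) :=
    mul_self_nonneg _
  have hzero : ∫ ω, ((μ[f | D]) ω - (μ[f | C]) ω) * ((μ[f | D]) ω - (μ[f | C]) ω) ∂μ = 0 := by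
    refine le_antisymm ?_ (integral_nonneg hnonneg)
    rw [integral_sub_mul_self hLD hLC, hcross]
    linarith
  have hint := (hLD.sub hLC).integrable_mul (hLD.sub hLC)
  filter_upwards [(integral_eq_zero_iff_of_nonneg hnonneg hint).1 hzero] with ω hω
  exact sub_eq_zero.1 (mul_self_eq_zero.1 hω)

theorem condExp_ae_eq_of_measurePreserving (hCD : C ≤ D) (hD : D ≤ m0) (hf : MemLp f 2 μ)
    {τ : Ω → Ω} (hτ : MeasurePreserving τ μ μ) (hfτ : f ∘ τ = f) (hτm : Measurable[C, D] τ) :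
    μ[f | D] =ᵐ[μ] μ[f | C] := by
  set g := μ[f | D]
  have hLg : MemLp g 2 μ := hf.condExp one_le_two
  have hLgτ : MemLp (g ∘ τ) 2 μ := hLg.comp_measurePreserving hτ
  have hLC : MemLp (μ[f | C]) 2 μ := hf.condExp one_le_two
  have hcomp {F : Ω → ℝ} (hF : AEStronglyMeasurable F μ) :
      ∫ ω, F (τ ω) ∂μ = ∫ ω, F ω ∂μ := by
    rw [← integral_map hτ.aemeasurable (by rwa [hτ.map_eq]), hτ.map_eq]
  have hfg : ∫ ω, f ω * (g ∘ τ) ω ∂μ = ∫ ω, f ω * g ω ∂μ := by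
    have h := hcomp (hf.integrable_mul hLg).aestronglyMeasurable
    exact (integral_congr_ae (ae_of_all _ fun ω => by
      simp only [Pi.mul_apply, ← congrFun hfτ ω, comp_apply])).trans h
  have hcross : ∫ ω, (μ[f | C]) ω * (g ∘ τ) ω ∂μ = ∫ ω, g ω * g ω ∂μ := by
    rw [integral_condExp_mul (hCD.trans hD) hf hLgτ
      (stronglyMeasurable_condExp.comp_measurable hτm), hfg,
      ← integral_condExp_mul hD hf hLg stronglyMeasurable_condExp]
  have hsq : ∫ ω, (g ∘ τ) ω * (g ∘ τ) ω ∂μ = ∫ ω, g ω * g ω ∂μ :=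
    hcomp (hLg.integrable_mul hLg).aestronglyMeasurable
  refine condExp_ae_eq_of_integral_mul_self_le hCD hD hf ?_
  have hnonneg : 0 ≤ ∫ ω, ((μ[f | C]) ω - (g ∘ τ) ω) * ((μ[f | C]) ω - (g ∘ τ) ω) ∂μ :=
    integral_nonneg fun ω => mul_self_nonneg _
  rw [integral_sub_mul_self hLC hLgτ, hcross, hsq] at hnonneg
  linarith

theorem integral_abs_condProb_sub_le {A S : Set Ω} (hA : MeasurableSet A)
    (hS : MeasurableSet S) : ∫ ω, |(μ⟦A | m⟧) ω - (μ⟦S | m⟧) ω| ∂μ ≤ μ.real (A ∆ S) := by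
  have hAi := (integrable_const (μ := μ) (1 : ℝ)).indicator hA
  have hSi := (integrable_const (μ := μ) (1 : ℝ)).indicator hS
  calc ∫ ω, |(μ⟦A | m⟧) ω - (μ⟦S | m⟧) ω| ∂μ
    _ = ∫ ω, |(μ[A.indicator (fun _ => (1 : ℝ)) - S.indicator (fun _ => (1 : ℝ)) | m]) ω| ∂μ :=
      integral_congr_ae ((condExp_sub hAi hSi m).symm.fun_comp abs)
    _ ≤ ∫ ω, |A.indicator (fun _ => (1 : ℝ)) ω - S.indicator (fun _ => (1 : ℝ)) ω| ∂μ :=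
      integral_abs_condExp_le _
    _ = ∫ ω, (A ∆ S).indicator 1 ω ∂μ := by
      simp only [← Set.abs_indicator_symmDiff]
      exact integral_congr_ae (ae_of_all _ fun ω =>
        abs_of_nonneg (Set.indicator_nonneg (fun _ _ => zero_le_one) ω))
    _ = μ.real (A ∆ S) := integral_indicator_one (hA.symmDiff hS)

theorem condProb_ae_eq_of_forall_exists_symmDiff_lt {A : Set Ω} (hA : MeasurableSet A)
    (happrox : ∀ δ > 0, ∃ S, MeasurableSet S ∧ μ.real (A ∆ S) < δ ∧
      μ⟦S | D⟧ =ᵐ[μ] μ⟦S | C⟧) : μ⟦A | D⟧ =ᵐ[μ] μ⟦A | C⟧ := by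
  have hint (m m' : MeasurableSpace Ω) (S T : Set Ω) :
      Integrable (fun ω => |(μ⟦S | m⟧) ω - (μ⟦T | m'⟧) ω|) μ :=
    (integrable_condExp.sub integrable_condExp).abs
  have hle : ∫ ω, |(μ⟦A | D⟧) ω - (μ⟦A | C⟧) ω| ∂μ ≤ 0 := by
    refine le_of_forall_pos_le_add fun δ hδ => ?_
    obtain ⟨S, hS, hAS, hDC⟩ := happrox (δ / 2) (half_pos hδ)
    calc ∫ ω, |(μ⟦A | D⟧) ω - (μ⟦A | C⟧) ω| ∂μ
      _ ≤ ∫ ω, (|(μ⟦A | D⟧) ω - (μ⟦S | D⟧) ω| + |(μ⟦A | C⟧) ω - (μ⟦S | C⟧) ω|) ∂μ := by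
        refine integral_mono_ae (hint _ _ _ _) ((hint _ _ _ _).add (hint _ _ _ _)) ?_
        filter_upwards [hDC] with ω hω
        rw [hω, abs_sub_comm ((μ⟦A | C⟧) ω)]
        exact abs_sub_le _ _ _
      _ ≤ μ.real (A ∆ S) + μ.real (A ∆ S) := by
        rw [integral_add (hint _ _ _ _) (hint _ _ _ _)]
        exact add_le_add (integral_abs_condProb_sub_le hA hS)
          (integral_abs_condProb_sub_le hA hS)
      _ ≤ 0 + δ := by linarith
  have hzero := (integral_eq_zero_iff_of_nonneg (fun ω => abs_nonneg _) (hint _ _ _ _)).1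
    (hle.antisymm (integral_nonneg fun ω => abs_nonneg _))
  filter_upwards [hzero] with ω hω
  exact sub_eq_zero.1 (abs_eq_zero.1 hω)

end CondExp

section CylinderEvents

variable {T : Type*} {X : T → Type*} [∀ t, MeasurableSpace (X t)] {Δ : Set T}
  {S : Set (∀ t, X t)}

theorem cylinderEvents_eq_comap_domRestrict (Δ : Set T) :
    cylinderEvents (X := X) Δ = MeasurableSpace.comap Δ.domRestrict MeasurableSpace.pi := by
  simp only [cylinderEvents, MeasurableSpace.pi, MeasurableSpace.comap_iSup,
    MeasurableSpace.comap_comp, iSup_subtype']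
  rfl

theorem mem_iff_mem_of_eqOn (hS : MeasurableSet[cylinderEvents Δ] S) {x y : ∀ t, X t}
    (hxy : ∀ t ∈ Δ, x t = y t) : x ∈ S ↔ y ∈ S := by
  rw [cylinderEvents_eq_comap_domRestrict] at hS
  obtain ⟨S', -, rfl⟩ := hS
  have hres : Δ.domRestrict x = Δ.domRestrict y := funext fun t => hxy t t.2
  rw [Set.mem_preimage, Set.mem_preimage, hres]

theorem isClopen_of_measurableSet_cylinderEvents [∀ t, TopologicalSpace (X t)]
    [∀ t, DiscreteTopology (X t)] (hΔ : Δ.Finite) (hS : MeasurableSet[cylinderEvents Δ] S) :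
    IsClopen S := by
  rw [cylinderEvents_eq_comap_domRestrict] at hS
  obtain ⟨S', -, rfl⟩ := hS
  have := hΔ.to_subtype
  exact (isClopen_discrete S').preimage (Pi.continuous_domRestrict Δ)

theorem cylinderEvents_union (Δ₁ Δ₂ : Set T) : cylinderEvents (X := X) (Δ₁ ∪ Δ₂) =
    cylinderEvents Δ₁ ⊔ cylinderEvents Δ₂ :=
  _root_.iSup_union

theorem cylinderEvents_iUnion {κ : Type*} (Δ : κ → Set T) :
    cylinderEvents (X := X) (⋃ n, Δ n) = ⨆ n, cylinderEvents (Δ n) := by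
  simp only [cylinderEvents, iSup_iUnion]

end CylinderEvents

section Arrays

variable {ι : Type*} [Fintype ι]

/-- The index `(i, a)` stands for the facet of the simplex `a : ι → ℕ` opposite to the vertex
`a i`. The coordinate `a i` is kept in the index, so that it may be chosen freely. -/
abbrev ArrayIndex (ι : Type*) := ι × (ι → ℕ)

/-- A `0`-`1` array recording, for each facet of each simplex on the vertex set `ι × ℕ`, whether the
facet is present. -/
abbrev FaceArray (ι : Type*) := ArrayIndex ι → Bool

/-- The coordinates in which an array index uses the distinguished vertex `0`. -/
def zeroSet (t : ArrayIndex ι) : Finset ι := {j | t.2 j = 0}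

theorem mem_zeroSet {t : ArrayIndex ι} {j : ι} : j ∈ zeroSet t ↔ t.2 j = 0 := by
  simp [zeroSet]

variable [DecidableEq ι]

/-- The action on array indices of a relabelling `σ` of the vertices in coordinate `i`. -/
def relabel (i : ι) (σ : ℕ → ℕ) (t : ArrayIndex ι) : ArrayIndex ι :=
  (t.1, update t.2 i (σ (t.2 i)))

/-- A law on face arrays is exchangeable if relabelling the vertices in one coordinate by an
injection does not change it. -/
def Exchangeable (μ : Measure (FaceArray ι)) : Prop :=
  ∀ (i : ι) (σ : ℕ → ℕ), Injective σ →
    MeasurePreserving (fun ω : FaceArray ι => ω ∘ relabel i σ) μ μ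

/-- The array indices not using the distinguished vertex of coordinate `i`. -/
def avoiding (i : ι) : Set (ArrayIndex ι) := {t | t.2 i ≠ 0}

/-- The array indices whose distinguished vertices form a set belonging to `𝒱`. -/
def withZeroSetIn (𝒱 : Finset (Finset ι)) : Set (ArrayIndex ι) := {t | zeroSet t ∈ 𝒱}

/-- The events depending only on the array entries that avoid the distinguished vertex of coordinate
`i` and whose distinguished vertices form a set belonging to `𝒱`. -/
abbrev facetEvents (𝒱 : Finset (Finset ι)) (i : ι) : MeasurableSpace (FaceArray ι) :=
  cylinderEvents (withZeroSetIn 𝒱 ∩ avoiding i)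

/-- The finitely many array indices involving only the vertices below `n`. -/
def box (n : ℕ) : Finset (ArrayIndex ι) :=
  Finset.univ ×ˢ Fintype.piFinset fun _ => Finset.range n

theorem mem_box {n : ℕ} {t : ArrayIndex ι} : t ∈ box n ↔ ∀ j, t.2 j < n := by
  simp [box]

theorem monotone_box : Monotone (box (ι := ι)) := fun _ _ hab _ ht =>
  mem_box.2 fun j => (mem_box.1 ht j).trans_le hab

theorem exists_mem_box (t : ArrayIndex ι) : ∃ n, t ∈ box n :=
  ⟨Finset.univ.sup t.2 + 1, mem_box.2 fun j =>
    Nat.lt_succ_of_le (Finset.le_sup (f := t.2) (Finset.mem_univ j))⟩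

theorem exists_cylinderEvents_inter_box_symmDiff_lt (μ : Measure (FaceArray ι))
    [IsFiniteMeasure μ] {U : Set (ArrayIndex ι)} {A : Set (FaceArray ι)}
    (hA : MeasurableSet[cylinderEvents U] A) {δ : ℝ} (hδ : 0 < δ) :
    ∃ n S, MeasurableSet[cylinderEvents (U ∩ ↑(box (ι := ι) n))] S ∧ μ.real (A ∆ S) < δ := by
  have hU : U = ⋃ n, U ∩ ↑(box (ι := ι) n) := by
    rw [← Set.inter_iUnion, Set.iUnion_eq_univ_iff.2 exists_mem_box, Set.inter_univ]
  rw [hU, cylinderEvents_iUnion] at hA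
  exact exists_measurableSet_measureReal_symmDiff_lt μ
    (fun a b hab => cylinderEvents_mono
      (Set.inter_subset_inter_right U (Finset.coe_subset.2 (monotone_box hab))))
    (fun n => cylinderEvents_le_pi) hA hδ

/-- An injection fixing `1, …, n` and missing `0`. -/
def shiftAbove (n a : ℕ) : ℕ := if a = 0 then n + 1 else if a ≤ n then a else a + 1

theorem shiftAbove_injective (n : ℕ) : Injective (shiftAbove n) := by
  intro a b h
  simp only [shiftAbove] at h
  split_ifs at h <;> lia

theorem shiftAbove_ne_zero (n a : ℕ) : shiftAbove n a ≠ 0 := by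
  simp only [shiftAbove]
  split_ifs <;> lia

theorem relabel_shiftAbove_of_mem_box {i : ι} {n : ℕ} {t : ArrayIndex ι} (hi : t ∈ avoiding i)
    (hn : t ∈ box n) : relabel i (shiftAbove n) t = t := by
  have hfix : shiftAbove n (t.2 i) = t.2 i := by
    rw [shiftAbove, if_neg hi, if_pos (mem_box.1 hn i).le]
  rw [relabel, hfix, update_eq_self]

theorem relabel_shiftAbove_mem {𝒱 : Finset (Finset ι)} (h𝒱 : IsLowerSet (𝒱 : Set (Finset ι)))
    {i : ι} {n : ℕ} {t : ArrayIndex ι} (ht : t ∈ withZeroSetIn 𝒱) :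
    relabel i (shiftAbove n) t ∈ withZeroSetIn 𝒱 ∩ avoiding i := by
  have hi : (relabel i (shiftAbove n) t).2 i ≠ 0 := by
    simp only [relabel, update_self]
    exact shiftAbove_ne_zero n _
  refine ⟨h𝒱 (fun j hj => ?_) ht, hi⟩
  rw [mem_zeroSet] at hj ⊢
  rcases eq_or_ne j i with rfl | hji
  · exact absurd hj hi
  · simpa only [relabel, update_of_ne hji] using hj

/-- Relabelling by `shiftAbove` preserves an event that involves finitely many vertices, while it
moves the conditioning away from the distinguished vertex of coordinate `i`. -/
theorem Exchangeable.condProb_facetEvents {μ : Measure (FaceArray ι)} [IsFiniteMeasure μ]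
    (hμ : Exchangeable μ) {𝒱 : Finset (Finset ι)} (h𝒱 : IsLowerSet (𝒱 : Set (Finset ι))) {i : ι}
    {S : Set (FaceArray ι)} (hS : MeasurableSet[cylinderEvents (avoiding i)] S) :
    μ⟦S | cylinderEvents (withZeroSetIn 𝒱)⟧ =ᵐ[μ] μ⟦S | facetEvents 𝒱 i⟧ := by
  refine condProb_ae_eq_of_forall_exists_symmDiff_lt (cylinderEvents_le_pi _ hS) fun δ hδ => ?_
  obtain ⟨n, S', hS', hSS'⟩ := exists_cylinderEvents_inter_box_symmDiff_lt μ hS hδ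
  have hS'm : MeasurableSet S' := cylinderEvents_le_pi _ hS'
  refine ⟨S', hS'm, hSS', condExp_ae_eq_of_measurePreserving
    (cylinderEvents_mono Set.inter_subset_left) cylinderEvents_le_pi
    ((memLp_const (1 : ℝ)).indicator hS'm) (hμ i _ (shiftAbove_injective n)) ?_ ?_⟩
  · have hinv : (fun ω : FaceArray ι => ω ∘ relabel i (shiftAbove n)) ⁻¹' S' = S' := by
      ext ω
      exact mem_iff_mem_of_eqOn hS' fun t ht =>
        congrArg ω (relabel_shiftAbove_of_mem_box ht.1 ht.2)
    funext ω
    rw [comp_apply, ← Set.indicator_comp_right fun ω : FaceArray ι => ω ∘ _, hinv]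
    rfl
  · exact measurable_cylinderEvents_iff.2 fun t ht =>
      measurable_cylinderEvent_apply (relabel_shiftAbove_mem h𝒱 ht)

end Arrays

section Transfer

variable {ι : Type*} [Fintype ι] {μ ν : Measure (FaceArray ι)}
  {𝒰 : Finset (Finset ι)} {J : Finset ι} {A : ι → Set (FaceArray ι)} {θ : ℝ}

/-- `ν` is bounded by `c * μ` on the events that ignore the distinguished vertex of some
coordinate. -/
def DominatedOff (c : ℝ≥0) (μ ν : Measure (FaceArray ι)) : Prop :=
  ∀ (i : ι) (S : Set (FaceArray ι)), MeasurableSet[cylinderEvents (avoiding i)] S →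
    ν.real S ≤ c * μ.real S

/-- An intersection of events, the `i`-th one depending only on the facets in `facetEvents 𝒰 i`, has
positive probability under `μ` as soon as it has under `ν`. -/
def TransfersPositivity (μ ν : Measure (FaceArray ι)) (𝒰 : Finset (Finset ι)) : Prop :=
  ∀ A : ι → Set (FaceArray ι), (∀ i, MeasurableSet[facetEvents 𝒰 i] (A i)) →
    0 < ν.real (⋂ i, A i) → 0 < μ.real (⋂ i, A i)

theorem transfersPositivity_empty [IsProbabilityMeasure μ] : TransfersPositivity μ ν ∅ := by
  intro A hA hpos
  obtain ⟨ω, hω⟩ := nonempty_of_measureReal_ne_zero hpos.ne'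
  have hAuniv (i : ι) : A i = Set.univ := Set.eq_univ_of_forall fun x =>
    (mem_iff_mem_of_eqOn (hA i) (y := ω) fun t ht => by simp [withZeroSetIn] at ht).2
      (Set.mem_iInter.1 hω i)
  simp [hAuniv]

variable [DecidableEq ι]

/-- The array indices in `box n` whose distinguished vertices are those of the coordinates
in `J`. -/
def stratum (J : Finset ι) (n : ℕ) : Set (ArrayIndex ι) := {t | zeroSet t = J} ∩ ↑(box (ι := ι) n)

instance (J : Finset ι) (n : ℕ) : Finite (stratum J n) :=
  ((box n).finite_toSet.subset Set.inter_subset_right).to_subtype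

theorem stratum_subset_avoiding {i : ι} (hi : i ∉ J) (n : ℕ) : stratum J n ⊆ avoiding i :=
  fun _ ht h0 => hi (ht.1 ▸ mem_zeroSet.2 h0)

theorem measurable_domRestrict_stratum (J : Finset ι) (n : ℕ) :
    Measurable ((stratum J n).domRestrict (π := fun _ => Bool)) :=
  measurable_pi_lambda _ fun t => measurable_pi_apply t.1

theorem facetEvents_sup_comap_stratum (𝒱 : Finset (Finset ι)) (i : ι) (J : Finset ι) (n : ℕ) :
    facetEvents 𝒱 i ⊔ MeasurableSpace.comap (stratum J n).domRestrict inferInstance =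
      cylinderEvents (withZeroSetIn 𝒱 ∩ avoiding i ∪ stratum J n) := by
  rw [cylinderEvents_union, cylinderEvents_eq_comap_domRestrict (stratum J n)]

theorem facetEvents_le_erase {i : ι} (hi : i ∈ J) :
    facetEvents 𝒰 i ≤ facetEvents (𝒰.erase J) i := by
  refine cylinderEvents_mono fun t ⟨ht𝒰, hti⟩ => ⟨Finset.mem_erase.2 ⟨?_, ht𝒰⟩, hti⟩
  rintro rfl
  exact hti (mem_zeroSet.1 hi)

theorem withZeroSetIn_inter_avoiding_eq_iUnion (hJ : J ∈ 𝒰) {i : ι} (hi : i ∉ J) :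
    withZeroSetIn 𝒰 ∩ avoiding i =
      ⋃ n, (withZeroSetIn (𝒰.erase J) ∩ avoiding i ∪ stratum J n) := by
  ext t
  rw [Set.mem_iUnion]
  constructor
  · rintro ⟨ht𝒰, hti⟩
    obtain ⟨n, hn⟩ := exists_mem_box t
    by_cases htJ : zeroSet t = J
    · exact ⟨n, Or.inr ⟨htJ, hn⟩⟩
    · exact ⟨n, Or.inl ⟨Finset.mem_erase.2 ⟨htJ, ht𝒰⟩, hti⟩⟩
  · rintro ⟨n, ⟨ht𝒰, hti⟩ | ht⟩
    · exact ⟨Finset.mem_of_mem_erase ht𝒰, hti⟩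
    · refine ⟨?_, stratum_subset_avoiding hi n ht⟩
      rw [withZeroSetIn, Set.mem_ofPred_eq, ht.1]
      exact hJ

theorem facetEvents_eq_iSup_erase (hJ : J ∈ 𝒰) {i : ι} (hi : i ∉ J) :
    facetEvents 𝒰 i = ⨆ n, facetEvents (𝒰.erase J) i ⊔
      MeasurableSpace.comap (stratum J n).domRestrict inferInstance := by
  simp only [facetEvents_sup_comap_stratum]
  rw [facetEvents, withZeroSetIn_inter_avoiding_eq_iUnion hJ hi, cylinderEvents_iUnion]

/-- The events replacing `A` when the zero set `J` is removed from the down-set: those that do not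
see `J` are kept, the others are weakened to having a large conditional proportion in the fibre
over the pattern `b` of the entries in `stratum J n`. -/
def reducedEvent (μ : Measure (FaceArray ι)) (𝒱 : Finset (Finset ι)) (J : Finset ι) (n : ℕ)
    (A : ι → Set (FaceArray ι)) (θ : ℝ) (b : stratum J n → Bool) (i : ι) : Set (FaceArray ι) :=
  if i ∈ J then A i else (thinSet μ (facetEvents 𝒱 i) (stratum J n).domRestrict (A i) θ b)ᶜ

theorem measurableSet_reducedEvent (hA : ∀ i, MeasurableSet[facetEvents 𝒰 i] (A i)) {n : ℕ}
    {b : stratum J n → Bool} (i : ι) :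
    MeasurableSet[facetEvents (𝒰.erase J) i] (reducedEvent μ (𝒰.erase J) J n A θ b i) := by
  unfold reducedEvent
  split_ifs with hi
  · exact facetEvents_le_erase hi _ (hA i)
  · exact @MeasurableSet.compl _ _ (_) (measurableSet_thinSet b)

theorem eventually_forall_measureReal_inter_thinFibers_le [IsFiniteMeasure μ] (hJ : J ∈ 𝒰)
    (hA : ∀ i, MeasurableSet[facetEvents 𝒰 i] (A i)) (hθ : θ < 1) {δ : ℝ} (hδ : 0 < δ) :
    ∀ᶠ n in atTop, ∀ i ∉ J, μ.real (A i ∩ thinFibers μ (facetEvents (𝒰.erase J) i)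
      (stratum J n).domRestrict (A i) θ) ≤ δ := by
  refine eventually_all.2 fun i => eventually_imp_distrib_left.2 fun hi => ?_
  refine eventually_measureReal_inter_thinFibers_le cylinderEvents_le_pi
    (measurable_domRestrict_stratum J) ?_ (facetEvents_eq_iSup_erase hJ hi ▸ hA i) hθ hδ
  simp only [facetEvents_sup_comap_stratum]
  exact fun a b hab => cylinderEvents_mono (Set.union_subset_union_right _
    (Set.inter_subset_inter_right _ (Finset.coe_subset.2 (monotone_box hab))))

theorem DominatedOff.exists_measureReal_iInter_reducedEvent_pos [IsFiniteMeasure μ]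
    [IsFiniteMeasure ν] {c : ℝ≥0} (hdom : DominatedOff c μ ν) (hJ : J ∈ 𝒰)
    (hA : ∀ i, MeasurableSet[facetEvents 𝒰 i] (A i)) (hθ : θ < 1)
    (hpos : 0 < ν.real (⋂ i, A i)) :
    ∃ n b, 0 < ν.real (⋂ i, reducedEvent μ (𝒰.erase J) J n A θ b i) := by
  set k : ℝ := ((Fintype.card {i // i ∉ J} : ℕ) : ℝ)
  obtain ⟨n, hn⟩ := (eventually_forall_measureReal_inter_thinFibers_le (μ := μ) hJ hA hθ
    (δ := ν.real (⋂ i, A i) / (k * c + 1)) (by positivity)).exists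
  set Z : ι → Set (FaceArray ι) := fun i =>
    thinFibers μ (facetEvents (𝒰.erase J) i) (stratum J n).domRestrict (A i) θ
  have hAZ (i : {i // i ∉ J}) :
      ν.real (A i ∩ Z i) ≤ c * (ν.real (⋂ i, A i) / (k * c + 1)) := by
    refine (hdom i _ ?_).trans (mul_le_mul_of_nonneg_left (hn i i.2) c.2)
    refine @MeasurableSet.inter _ (cylinderEvents (avoiding i.1)) _ _
      (cylinderEvents_mono Set.inter_subset_right _ (hA i)) ?_
    have hZ : MeasurableSet[facetEvents (𝒰.erase J) i.1 ⊔
        MeasurableSpace.comap (stratum J n).domRestrict inferInstance] (Z i.1) :=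
      measurableSet_thinFibers
    rw [facetEvents_sup_comap_stratum] at hZ
    exact cylinderEvents_mono (Set.union_subset Set.inter_subset_right
      (stratum_subset_avoiding i.2 n)) _ hZ
  have hbad : ν.real (⋃ i : {i // i ∉ J}, A i ∩ Z i) < ν.real (⋂ i, A i) :=
    calc ν.real (⋃ i : {i // i ∉ J}, A i ∩ Z i)
      _ ≤ ∑ i : {i // i ∉ J}, ν.real (A i ∩ Z i) := measureReal_iUnion_fintype_le _
      _ ≤ ∑ _i : {i // i ∉ J}, c * (ν.real (⋂ i, A i) / (k * c + 1)) :=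
        Finset.sum_le_sum fun i _ => hAZ i
      _ = k * c / (k * c + 1) * ν.real (⋂ i, A i) := by
        rw [Finset.sum_const, Finset.card_univ, nsmul_eq_mul]
        ring
      _ < ν.real (⋂ i, A i) :=
        mul_lt_of_lt_one_left hpos ((div_lt_one (by positivity)).2 (lt_add_one _))
  obtain ⟨b, hb⟩ := exists_measureReal_preimage_singleton_inter_pos
    (measurable_domRestrict_stratum J n) ((sub_pos.2 hbad).trans_le le_measureReal_sdiff)
  refine ⟨n, b, hb.trans_le (measureReal_mono fun ω ⟨hωb, hωA, hωbad⟩ => ?_)⟩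
  refine Set.mem_iInter.2 fun i => ?_
  unfold reducedEvent
  split_ifs with hi
  · exact Set.mem_iInter.1 hωA i
  · intro hthin
    have hωZ : ω ∈ (stratum J n).domRestrict (π := fun _ => Bool) ⁻¹' {b} ∩ Z i := by
      rw [preimage_singleton_inter_thinFibers]
      exact ⟨hωb, hthin⟩
    exact hωbad (Set.mem_iUnion.2 ⟨⟨i, hi⟩, Set.mem_iInter.1 hωA i, hωZ.2⟩)

theorem Exchangeable.measureReal_iInter_pos_of_reducedEvent [IsFiniteMeasure μ]
    (hμ : Exchangeable μ) (h𝒱 : IsLowerSet (𝒰.erase J : Set (Finset ι))) (hJ : J ≠ Finset.univ)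
    (hA : ∀ i, MeasurableSet[facetEvents 𝒰 i] (A i)) (hθ1 : θ ≤ 1)
    (hθ : Fintype.card ι * (1 - θ) < 1) {n : ℕ} {b : stratum J n → Bool}
    (hpos : 0 < μ.real (⋂ i, reducedEvent μ (𝒰.erase J) J n A θ b i)) :
    0 < μ.real (⋂ i, A i) := by
  set Q := ⋂ i, reducedEvent μ (𝒰.erase J) J n A θ b i
  set F : Set (FaceArray ι) := (stratum J n).domRestrict ⁻¹' {b}
  have hQ : MeasurableSet[cylinderEvents (withZeroSetIn (𝒰.erase J))] Q :=
    @MeasurableSet.iInter _ _ (cylinderEvents _) _ _ fun i =>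
      cylinderEvents_mono Set.inter_subset_left _ (measurableSet_reducedEvent hA i)
  have hF : ∀ i ∉ J, MeasurableSet[cylinderEvents (avoiding i)] F := fun i hi => by
    refine cylinderEvents_mono (stratum_subset_avoiding hi n) _ ?_
    rw [cylinderEvents_eq_comap_domRestrict]
    exact ⟨{b}, measurableSet_singleton b, rfl⟩
  have hlt : ∀ i ∉ J, θ * μ.real (F ∩ Q) < μ.real (A i ∩ F ∩ Q) := fun i hi => by
    have hAi : MeasurableSet[cylinderEvents (avoiding i)] (A i) :=
      cylinderEvents_mono Set.inter_subset_right _ (hA i)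
    refine mul_measureReal_lt_of_disjoint_thinSet cylinderEvents_le_pi
      (measurable_domRestrict_stratum J n) (cylinderEvents_le_pi _ (hA i))
      (hμ.condProb_facetEvents h𝒱 (hF i hi))
      (hμ.condProb_facetEvents h𝒱 (@MeasurableSet.inter _ (cylinderEvents _) _ _ hAi (hF i hi)))
      hQ (Set.disjoint_left.2 fun ω hωQ => ?_) hpos
    simpa only [reducedEvent, if_neg hi, Set.mem_compl_iff] using Set.mem_iInter.1 hωQ i
  obtain ⟨i₀, hi₀⟩ : ∃ i, i ∉ J := by
    simpa only [ne_eq, Finset.eq_univ_iff_forall, not_forall] using hJ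
  have hFQ : 0 < μ.real (F ∩ Q) := by
    refine measureReal_nonneg.lt_of_ne fun h0 => (hlt i₀ hi₀).not_ge ?_
    rw [← h0, mul_zero, h0, Set.inter_assoc]
    exact measureReal_mono Set.inter_subset_right
  refine measureReal_iInter_pos (fun i => cylinderEvents_le_pi _ (hA i)) hFQ (fun i => ?_) hθ
  by_cases hi : i ∈ J
  · have hsub : F ∩ Q ⊆ A i := fun ω hω => by
      simpa only [reducedEvent, if_pos hi] using Set.mem_iInter.1 hω.2 i
    rw [Set.inter_eq_right.2 hsub]
    exact mul_le_of_le_one_left measureReal_nonneg hθ1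
  · rw [← Set.inter_assoc]
    exact (hlt i hi).le

theorem Exchangeable.transfersPositivity [IsProbabilityMeasure μ] [IsFiniteMeasure ν]
    (hμ : Exchangeable μ) {c : ℝ≥0} (hdom : DominatedOff c μ ν)
    (h𝒰 : IsLowerSet (𝒰 : Set (Finset ι))) (huniv : Finset.univ ∉ 𝒰) :
    TransfersPositivity μ ν 𝒰 := by
  induction 𝒰 using Finset.strongInduction with
  | H 𝒰 ih =>
    rcases 𝒰.eq_empty_or_nonempty with rfl | hne
    · exact transfersPositivity_empty
    intro A hA hpos
    obtain ⟨J, hJ⟩ := 𝒰.exists_maximal hne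
    have h𝒱 : IsLowerSet (𝒰.erase J : Set (Finset ι)) := by
      rw [Finset.coe_erase]
      exact h𝒰.erase fun I hI hJI => (hJ.eq_of_le hI hJI).symm
    set θ : ℝ := Fintype.card ι / (Fintype.card ι + 1)
    have hθ : θ < 1 := (div_lt_one (by positivity)).2 (lt_add_one _)
    have hθ' : Fintype.card ι * (1 - θ) < 1 := by
      have h : (Fintype.card ι : ℝ) * (1 - θ) = θ := by simp only [θ]; field_simp; ring
      rwa [h]
    obtain ⟨n, b, hred⟩ := hdom.exists_measureReal_iInter_reducedEvent_pos hJ.1 hA hθ hpos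
    have hredμ := ih _ (Finset.erase_ssubset hJ.1) h𝒱
      (fun h => huniv (Finset.mem_of_mem_erase h)) _ (measurableSet_reducedEvent hA) hred
    exact hμ.measureReal_iInter_pos_of_reducedEvent h𝒱 (fun h => huniv (h ▸ hJ.1)) hA hθ.le hθ'
      hredμ

end Transfer

theorem Exchangeable.measureReal_iInter_pos {ι : Type*} [Finite ι] [DecidableEq ι]
    {μ ν : Measure (FaceArray ι)} [IsProbabilityMeasure μ] [IsFiniteMeasure ν]
    {A : ι → Set (FaceArray ι)} (hμ : Exchangeable μ) {c : ℝ≥0} (hdom : DominatedOff c μ ν)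
    (hA : ∀ i, MeasurableSet[cylinderEvents (avoiding i)] (A i)) (hpos : 0 < ν.real (⋂ i, A i)) :
    0 < μ.real (⋂ i, A i) := by
  have := Fintype.ofFinite ι
  have hlower : IsLowerSet ((Finset.univ.erase Finset.univ : Finset (Finset ι)) :
      Set (Finset ι)) := fun I I' hI'I hI =>
    Finset.mem_erase.2 ⟨fun h => Finset.ne_of_mem_erase hI
      (Finset.univ_subset_iff.1 (h ▸ hI'I)), Finset.mem_univ _⟩
  refine hμ.transfersPositivity hdom hlower (Finset.notMem_erase _ _) A (fun i => ?_) hpos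
  have hsub : avoiding i ⊆ withZeroSetIn (Finset.univ.erase Finset.univ) ∩ avoiding i :=
    fun t ht => by
      refine ⟨Finset.mem_erase.2 ⟨fun h => ?_, Finset.mem_univ _⟩, ht⟩
      exact ht (mem_zeroSet.1 (h ▸ Finset.mem_univ i))
  exact cylinderEvents_mono hsub _ (hA i)

section ProductMeasure

variable {κ : Type*} [DecidableEq κ] {X : κ → Type*} [∀ p, MeasurableSpace (X p)]
  (P : ∀ p, Measure (X p)) [∀ p, IsProbabilityMeasure (P p)]

theorem map_update_prod_infinitePi (p : κ) :
    ((Measure.infinitePi P).prod (P p)).map (fun z => update z.1 p z.2) =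
      Measure.infinitePi P := by
  refine Measure.eq_infinitePi _ fun F t ht => ?_
  have hpre : (fun z : (∀ q, X q) × X p => update z.1 p z.2) ⁻¹' Set.pi F t =
      Set.pi ↑(F.erase p) t ×ˢ (if p ∈ F then t p else Set.univ) := by
    ext ⟨y, v⟩
    simp only [Set.mem_preimage, Set.mem_pi, Finset.mem_coe, Set.mem_prod, Finset.mem_erase]
    refine ⟨fun h => ⟨fun q hq => by simpa only [update_of_ne hq.1] using h q hq.2, ?_⟩,
      fun h q hq => ?_⟩
    · split_ifs with hp
      · simpa only [update_self] using h p hp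
      · exact Set.mem_univ v
    · rcases eq_or_ne q p with rfl | hqp
      · simpa only [update_self, if_pos hq] using h.2
      · simpa only [update_of_ne hqp] using h.1 q ⟨hqp, hq⟩
  rw [Measure.map_apply (by fun_prop) (.pi F.countable_toSet fun _ _ => ht _), hpre,
    Measure.prod_prod, Measure.infinitePi_pi _ fun _ _ => ht _]
  split_ifs with hp
  · rw [Finset.prod_erase_mul F (fun q => P q (t q)) hp]
  · rw [measure_univ, mul_one, Finset.erase_eq_of_notMem hp]

theorem infinitePi_inter_le_mul (p : κ) {G Y : Set (∀ q, X q)} (hG : MeasurableSet G)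
    (hY : MeasurableSet Y) (hYp : ∀ y v, update y p v ∈ Y ↔ y ∈ Y) {c : ENNReal}
    (hGc : ∀ y, P p {v | update y p v ∈ G} ≤ c) :
    Measure.infinitePi P (G ∩ Y) ≤ c * Measure.infinitePi P Y := by
  have hupd : Measurable fun z : (∀ q, X q) × X p => update z.1 p z.2 := by fun_prop
  calc Measure.infinitePi P (G ∩ Y)
    _ = ∫⁻ y, P p {v | update y p v ∈ G ∩ Y} ∂Measure.infinitePi P := by
      conv_lhs => rw [← map_update_prod_infinitePi P p, Measure.map_apply hupd (hG.inter hY),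
        Measure.prod_apply (hupd (hG.inter hY))]
      rfl
    _ ≤ ∫⁻ y, Y.indicator (fun _ => c) y ∂Measure.infinitePi P := by
      refine lintegral_mono fun y => ?_
      by_cases hy : y ∈ Y
      · simp only [Set.mem_inter_iff, hYp, hy, and_true, Set.indicator_of_mem]
        exact hGc y
      · simp [hYp, hy]
    _ = c * Measure.infinitePi P Y := lintegral_indicator_const hY c

end ProductMeasure

section FiniteModel

variable {ι : Type*} {V : Type*}

/-- `D`, viewed as a `card ι`-partite hypergraph, is simplex closed if a simplex all of whose
facets extend to edges of `D` is itself an edge of `D`. -/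
def IsSimplexClosed (D : Finset (ι → V)) : Prop :=
  ∀ c : ι → V, (∀ i, ∃ x ∈ D, Set.EqOn x c {i}ᶜ) → c ∈ D

open Classical in
/-- The array recording which facets of the simplices on the sampled vertices `y` extend to an
edge of `D`. -/
noncomputable def faceArray (D : Finset (ι → V)) (y : ι × ℕ → V) : FaceArray ι :=
  fun t => decide (∃ x ∈ D, Set.EqOn x (fun j => y (j, t.2 j)) {t.1}ᶜ)

theorem faceArray_eq_true_iff {D : Finset (ι → V)} {y : ι × ℕ → V} {t : ArrayIndex ι} :
    faceArray D y t = true ↔ ∃ x ∈ D, Set.EqOn x (fun j => y (j, t.2 j)) {t.1}ᶜ := by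
  simp only [faceArray, decide_eq_true_eq]

theorem faceArray_congr (D : Finset (ι → V)) {y y' : ι × ℕ → V} {t t' : ArrayIndex ι}
    (h₁ : t.1 = t'.1) (h₂ : ∀ j, y (j, t.2 j) = y' (j, t'.2 j)) :
    faceArray D y t = faceArray D y' t' := by
  rw [Bool.eq_iff_iff, faceArray_eq_true_iff, faceArray_eq_true_iff, h₁, funext h₂]

/-- The samples whose distinguished vertices span an edge of `D`. -/
def edgeEvent (D : Finset (ι → V)) : Set (ι × ℕ → V) := {y | (fun j => y (j, 0)) ∈ D}

theorem measurable_faceArray [MeasurableSpace V] [DiscreteMeasurableSpace V]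
    [Countable V] [Finite ι] (D : Finset (ι → V)) : Measurable (faceArray D) := by
  classical
  refine measurable_pi_lambda _ fun t => ?_
  have hdec : Measurable fun z : ι → V => decide (∃ x ∈ D, Set.EqOn x z {t.1}ᶜ) :=
    Measurable.of_discrete
  exact hdec.comp (g := _) (f := fun y : ι × ℕ → V => fun j => y (j, t.2 j)) (by fun_prop)

variable [DecidableEq ι]

/-- An index of the facet opposite to coordinate `i` of the simplex on the distinguished vertices.
The irrelevant `i`-th entry is set to `1` so that the index lies in `avoiding i`. -/
def apex (i : ι) : ArrayIndex ι := (i, Pi.single i 1)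

/-- The facet opposite to coordinate `i` of the simplex on the distinguished vertices is present. -/
def apexEvent (i : ι) : Set (FaceArray ι) := (fun ω => ω (apex i)) ⁻¹' {true}

theorem apex_mem_avoiding (i : ι) : apex i ∈ avoiding i := by
  simp [apex, avoiding]

theorem measurableSet_apexEvent (i : ι) :
    MeasurableSet[cylinderEvents (avoiding i)] (apexEvent i) :=
  measurable_cylinderEvent_apply (apex_mem_avoiding i) (measurableSet_singleton true)

theorem measurableSet_iInter_apexEvent [Countable ι] : MeasurableSet (⋂ i : ι, apexEvent i) :=
  MeasurableSet.iInter fun i => cylinderEvents_le_pi _ (measurableSet_apexEvent i)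

theorem isClopen_apexEvent (i : ι) : IsClopen (apexEvent i) :=
  (isClopen_discrete {true}).preimage (continuous_apply (apex i))

theorem faceArray_preimage_iInter_apexEvent {D : Finset (ι → V)} (hD : IsSimplexClosed D) :
    faceArray D ⁻¹' ⋂ i, apexEvent i = edgeEvent D := by
  ext y
  have hface (i : ι) : faceArray D y (apex i) = true ↔
      ∃ x ∈ D, Set.EqOn x (fun j => y (j, 0)) {i}ᶜ := by
    rw [faceArray_eq_true_iff]
    refine exists_congr fun x => and_congr_right fun _ => forall₂_congr fun j hj => ?_
    simp only [apex, Pi.single_eq_of_ne (show j ≠ i from hj)]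
  simp only [apexEvent, Set.mem_preimage, Set.mem_iInter, Set.mem_singleton_iff, hface]
  exact ⟨fun h => hD _ h, fun h i => ⟨_, h, Set.eqOn_refl _ _⟩⟩

/-- The action on sampled vertices that induces `relabel i σ` on array indices. -/
def relabelVertex (i : ι) (σ : ℕ → ℕ) (p : ι × ℕ) : ι × ℕ := (p.1, update (fun _ => id) i σ p.1 p.2)

theorem relabelVertex_injective (i : ι) {σ : ℕ → ℕ} (hσ : Injective σ) :
    Injective (relabelVertex i σ) := by
  have hinj (j : ι) : Injective (update (fun _ => id) i σ j) := by
    rcases eq_or_ne j i with rfl | hj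
    · rwa [update_self]
    · rw [update_of_ne hj]
      exact injective_id
  rintro ⟨j, a⟩ ⟨j', a'⟩ h
  obtain rfl : j = j' := congrArg Prod.fst h
  exact congrArg (Prod.mk j) (hinj j (congrArg Prod.snd h))

theorem faceArray_comp_relabel (D : Finset (ι → V)) (y : ι × ℕ → V) (i : ι) (σ : ℕ → ℕ) :
    faceArray D y ∘ relabel i σ = faceArray D (y ∘ relabelVertex i σ) := by
  funext t
  refine faceArray_congr D rfl fun j => congrArg y ?_
  rcases eq_or_ne j i with rfl | hj
  · simp only [relabel, relabelVertex, update_self]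
  · simp only [relabel, relabelVertex, update_of_ne hj, id]

theorem faceArray_apply_update (D : Finset (ι → V)) {i : ι} {t : ArrayIndex ι}
    (ht : t ∈ avoiding i) (y : ι × ℕ → V) (v : V) :
    faceArray D (update y (i, 0) v) t = faceArray D y t := by
  refine faceArray_congr D rfl fun j => update_of_ne (fun h => ht ?_) _ _
  obtain ⟨rfl, h0⟩ := Prod.mk.inj h
  exact h0

end FiniteModel

section ArrayLaws

open ProbabilityTheory

variable {ι : Type*} {V : Type*} [MeasurableSpace V]

variable (ι V) in
/-- The law of independent uniform samples from `V`, one for each vertex in `ι × ℕ`. -/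
noncomputable abbrev vertexLaw : Measure (ι × ℕ → V) :=
  Measure.infinitePi fun _ => uniformOn Set.univ

/-- The law of the face array of `D` on uniformly sampled vertices. -/
noncomputable def arrayLaw (D : Finset (ι → V)) : Measure (FaceArray ι) :=
  (vertexLaw ι V).map (faceArray D)

/-- The law of the face array of `D` conditioned on the distinguished vertices spanning an edge. -/
noncomputable def edgeArrayLaw (D : Finset (ι → V)) : Measure (FaceArray ι) :=
  ((vertexLaw ι V)[|edgeEvent D]).map (faceArray D)

variable [DiscreteMeasurableSpace V]

instance [Finite V] [Nonempty V] : IsProbabilityMeasure (uniformOn (Set.univ : Set V)) :=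
  isProbabilityMeasure_uniformOn Set.finite_univ Set.univ_nonempty

theorem measurableSet_edgeEvent [Countable V] [Finite ι] (D : Finset (ι → V)) :
    MeasurableSet (edgeEvent D) := by
  have hev : Measurable fun (y : ι × ℕ → V) j => y (j, 0) := by fun_prop
  exact hev (MeasurableSet.of_discrete (s := (D : Set (ι → V))))

theorem exchangeable_arrayLaw [Finite V] [Nonempty V] [Finite ι] [DecidableEq ι]
    (D : Finset (ι → V)) : Exchangeable (arrayLaw D) := by
  intro i σ hσ
  have hrel : Measurable fun ω : FaceArray ι => ω ∘ relabel i σ := by fun_prop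
  have hvert : Measurable fun y : ι × ℕ → V => y ∘ relabelVertex i σ := by fun_prop
  refine ⟨hrel, ?_⟩
  have hcomm : (fun ω : FaceArray ι => ω ∘ relabel i σ) ∘ faceArray D =
      faceArray D ∘ fun y => y ∘ relabelVertex i σ :=
    funext fun y => faceArray_comp_relabel D y i σ
  rw [arrayLaw, Measure.map_map hrel (measurable_faceArray D), hcomm,
    ← Measure.map_map (measurable_faceArray D) hvert]
  exact congrArg _ (Measure.map_infinitePi_infinitePi_of_inj (relabelVertex_injective i hσ))

theorem edgeArrayLaw_real_iInter_apexEvent [Finite V] [Nonempty V] [Finite ι] [DecidableEq ι]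
    {D : Finset (ι → V)} (hD : IsSimplexClosed D)
    (hpos : 0 < (vertexLaw ι V).real (edgeEvent D)) :
    (edgeArrayLaw D).real (⋂ i, apexEvent i) = 1 := by
  rw [edgeArrayLaw, map_measureReal_apply (measurable_faceArray D) measurableSet_iInter_apexEvent,
    faceArray_preimage_iInter_apexEvent hD, measureReal_def, cond_apply (measurableSet_edgeEvent D),
    Set.inter_self, ENNReal.inv_mul_cancel, ENNReal.toReal_one]
  · exact fun h => hpos.ne' (by rw [measureReal_def, h, ENNReal.toReal_zero])
  · exact measure_ne_top _ _

variable [Fintype V] [Nonempty V]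

theorem vertexLaw_real_edgeEvent [Fintype ι] (D : Finset (ι → V)) :
    (vertexLaw ι V).real (edgeEvent D) = #D / (Fintype.card V : ℝ) ^ Fintype.card ι := by
  have hmap := Measure.map_infinitePi_infinitePi_of_inj
    (P := fun _ : ι × ℕ => uniformOn (Set.univ : Set V)) (f := fun j : ι => (j, 0))
    fun _ _ h => congrArg Prod.fst h
  have hD : vertexLaw ι V (edgeEvent D) = ∑ _x ∈ D, (Fintype.card V : ENNReal)⁻¹ ^ Fintype.card ι :=
    calc vertexLaw ι V (edgeEvent D)
      _ = (vertexLaw ι V).map (fun y j => y (j, 0)) (D : Set (ι → V)) :=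
        (Measure.map_apply (by fun_prop) MeasurableSet.of_discrete).symm
      _ = ∑ x ∈ D, Measure.infinitePi (fun _ : ι => uniformOn Set.univ) {x} := by
        rw [hmap, sum_measure_singleton]
      _ = ∑ _x ∈ D, (Fintype.card V : ENNReal)⁻¹ ^ Fintype.card ι := by
        simp [uniformOn_univ]
  simp [Measure.real, hD, div_eq_mul_inv]

variable [DecidableEq ι] [Finite ι] {D : Finset (ι → V)} {m : ℕ}

theorem vertexLaw_real_edgeEvent_inter_le (hline : ∀ i y, {v | update y i v ∈ D}.ncard ≤ m) (i : ι)
    {Y : Set (ι × ℕ → V)} (hY : MeasurableSet Y) (hYi : ∀ y v, update y (i, 0) v ∈ Y ↔ y ∈ Y) :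
    (vertexLaw ι V).real (edgeEvent D ∩ Y) ≤ m / Fintype.card V * (vertexLaw ι V).real Y := by
  have hfiber (y : ι × ℕ → V) : uniformOn Set.univ {v | update y (i, 0) v ∈ edgeEvent D} ≤
      m / Fintype.card V := by
    have hset : {v | update y (i, 0) v ∈ edgeEvent D} =
        {v | update (fun j => y (j, 0)) i v ∈ D} := by
      ext v
      have hupd : (fun j => update y (i, 0) v (j, 0)) = update (fun j => y (j, 0)) i v :=
        update_comp_eq_of_injective y (fun _ _ h => congrArg Prod.fst h) i v
      simp only [edgeEvent, Set.mem_ofPred_eq, hupd]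
    rw [uniformOn_univ, hset, Measure.count_apply MeasurableSet.of_discrete,
      ← (Set.toFinite _).cast_ncard_eq]
    gcongr
    exact_mod_cast hline i _
  have hle := infinitePi_inter_le_mul (fun _ : ι × ℕ => uniformOn (Set.univ : Set V)) (i, 0)
    (measurableSet_edgeEvent D) hY hYi hfiber
  have hfin : (m / Fintype.card V : ENNReal) ≠ ⊤ := ENNReal.div_ne_top (by simp) (by simp)
  simpa [Measure.real] using ENNReal.toReal_mono (ENNReal.mul_ne_top hfin (measure_ne_top _ _)) hle

theorem arrayLaw_real_iInter_apexEvent_le [Nonempty ι] (hD : IsSimplexClosed D)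
    (hline : ∀ i y, {v | update y i v ∈ D}.ncard ≤ m) :
    (arrayLaw D).real (⋂ i, apexEvent i) ≤ m / Fintype.card V := by
  rw [arrayLaw, map_measureReal_apply (measurable_faceArray D) measurableSet_iInter_apexEvent,
    faceArray_preimage_iInter_apexEvent hD]
  simpa using vertexLaw_real_edgeEvent_inter_le hline (Classical.arbitrary ι)
    MeasurableSet.univ fun _ _ => Iff.rfl

theorem dominatedOff_edgeArrayLaw (hline : ∀ i y, {v | update y i v ∈ D}.ncard ≤ m) {c : ℝ≥0}
    (hc : m / Fintype.card V ≤ c * (vertexLaw ι V).real (edgeEvent D))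
    (hpos : 0 < (vertexLaw ι V).real (edgeEvent D)) :
    DominatedOff c (arrayLaw D) (edgeArrayLaw D) := by
  intro i S hS
  have hSm := cylinderEvents_le_pi _ hS
  have hY := measurable_faceArray D hSm
  have hYi (y : ι × ℕ → V) (v : V) :
      update y (i, 0) v ∈ faceArray D ⁻¹' S ↔ y ∈ faceArray D ⁻¹' S :=
    mem_iff_mem_of_eqOn hS fun t ht => faceArray_apply_update D ht y v
  rw [edgeArrayLaw, arrayLaw, map_measureReal_apply (measurable_faceArray D) hSm,
    map_measureReal_apply (measurable_faceArray D) hSm, measureReal_def,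
    cond_apply (measurableSet_edgeEvent D), ENNReal.toReal_mul, ENNReal.toReal_inv,
    ← measureReal_def, ← measureReal_def, inv_mul_le_iff₀ hpos]
  calc (vertexLaw ι V).real (edgeEvent D ∩ faceArray D ⁻¹' S)
    _ ≤ m / Fintype.card V * (vertexLaw ι V).real (faceArray D ⁻¹' S) :=
      vertexLaw_real_edgeEvent_inter_le hline i hY hYi
    _ ≤ c * (vertexLaw ι V).real (edgeEvent D) * (vertexLaw ι V).real (faceArray D ⁻¹' S) := by
      gcongr
    _ = _ := by ring

end ArrayLaws

section Limits

variable {Ω κ : Type*} [TopologicalSpace Ω] [MeasurableSpace Ω] [OpensMeasurableSpace Ω]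
  {L : Filter κ} {μs : κ → ProbabilityMeasure Ω} {μ : ProbabilityMeasure Ω}

theorem tendsto_measureReal_of_isClopen [HasOuterApproxClosed Ω] (h : Tendsto μs L (𝓝 μ))
    {S : Set Ω} (hS : IsClopen S) :
    Tendsto (fun N => (μs N : Measure Ω).real S) L (𝓝 ((μ : Measure Ω).real S)) :=
  NNReal.tendsto_coe.2 (ProbabilityMeasure.tendsto_measure_of_isClopen_of_tendsto h hS)

theorem measurePreserving_of_tendsto [L.NeBot] [BorelSpace Ω] [HasOuterApproxClosed Ω]
    (h : Tendsto μs L (𝓝 μ)) {f : Ω → Ω} (hf : Continuous f)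
    (hμs : ∀ N, MeasurePreserving f (μs N) (μs N)) : MeasurePreserving f μ μ := by
  have hmap : (fun N => (μs N).map hf.measurable.aemeasurable) = μs :=
    funext fun N => Subtype.ext (hμs N).map_eq
  have hlim := ProbabilityMeasure.tendsto_map_of_tendsto_of_continuous μs μ h hf
  rw [hmap] at hlim
  exact ⟨hf.measurable, congrArg ProbabilityMeasure.toMeasure (tendsto_nhds_unique hlim h)⟩

end Limits

section ArrayLimits

variable {ι : Type*}

theorem dominatedOff_of_forall_mem_box [Fintype ι] [DecidableEq ι] {c : ℝ≥0}
    {μ ν : Measure (FaceArray ι)} [IsFiniteMeasure μ] [IsFiniteMeasure ν] (h : ∀ i n S,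
      MeasurableSet[cylinderEvents (avoiding i ∩ ↑(box (ι := ι) n))] S → ν.real S ≤ c * μ.real S) :
    DominatedOff c μ ν := by
  intro i S hS
  have happrox (δ : ℝ) (hδ : 0 < δ) : ν.real S ≤ c * μ.real S + (c + 1) * δ := by
    obtain ⟨n, S', hS', hSS'⟩ := exists_cylinderEvents_inter_box_symmDiff_lt (μ + ν) hS hδ
    have hSm : MeasurableSet S := cylinderEvents_le_pi S hS
    have hS'm : MeasurableSet S' := cylinderEvents_le_pi S' hS'
    rw [measureReal_add_apply] at hSS'
    have hν := (le_abs_self _).trans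
      (abs_measureReal_sub_le_measureReal_symmDiff (μ := ν)
        hSm.nullMeasurableSet hS'm.nullMeasurableSet)
    have hμ := (neg_le_abs _).trans
      (abs_measureReal_sub_le_measureReal_symmDiff (μ := μ)
        hSm.nullMeasurableSet hS'm.nullMeasurableSet)
    calc ν.real S
      _ ≤ ν.real S' + δ := by
        linarith [measureReal_nonneg (μ := μ) (s := S ∆ S')]
      _ ≤ c * μ.real S' + δ := by grw [h i n S' hS']
      _ ≤ c * (μ.real S + δ) + δ := by
        gcongr
        linarith [measureReal_nonneg (μ := ν) (s := S ∆ S')]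
      _ = _ := by ring
  refine le_of_forall_pos_le_add fun η hη => ?_
  simpa only [mul_div_cancel₀ _ (show (c : ℝ) + 1 ≠ 0 by positivity)] using
    happrox (η / (c + 1)) (by positivity)

variable [Finite ι]

theorem dominatedOff_of_tendsto {κ : Type*} {L : Filter κ} [L.NeBot] {c : ℝ≥0}
    {μs νs : κ → ProbabilityMeasure (FaceArray ι)} {μ ν : ProbabilityMeasure (FaceArray ι)}
    (hμ : Tendsto μs L (𝓝 μ)) (hν : Tendsto νs L (𝓝 ν))
    (h : ∀ N, DominatedOff c (μs N : Measure (FaceArray ι)) (νs N)) :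
    DominatedOff c (μ : Measure (FaceArray ι)) ν := by
  classical
  have := Fintype.ofFinite ι
  refine dominatedOff_of_forall_mem_box fun i n S hS => ?_
  have hclopen : IsClopen S :=
    isClopen_of_measurableSet_cylinderEvents ((box n).finite_toSet.inter_of_right _) hS
  exact le_of_tendsto_of_tendsto' (tendsto_measureReal_of_isClopen hν hclopen)
    ((tendsto_measureReal_of_isClopen hμ hclopen).const_mul _)
    fun N => h N i S (cylinderEvents_mono Set.inter_subset_left S hS)

variable [DecidableEq ι]

theorem exchangeable_of_tendsto {κ : Type*} {L : Filter κ} [L.NeBot]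
    {μs : κ → ProbabilityMeasure (FaceArray ι)} {μ : ProbabilityMeasure (FaceArray ι)}
    (h : Tendsto μs L (𝓝 μ)) (hμs : ∀ N, Exchangeable (μs N : Measure (FaceArray ι))) :
    Exchangeable (μ : Measure (FaceArray ι)) := fun i σ hσ =>
  measurePreserving_of_tendsto h (continuous_pi fun _ => continuous_apply _)
    fun N => hμs N i σ hσ

theorem not_tendsto_measureReal_iInter_zero {c : ℝ≥0}
    {μs νs : ℕ → ProbabilityMeasure (FaceArray ι)}
    (hμs : ∀ N, Exchangeable (μs N : Measure (FaceArray ι)))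
    (hdom : ∀ N, DominatedOff c (μs N : Measure (FaceArray ι)) (νs N))
    {A : ι → Set (FaceArray ι)} (hA : ∀ i, MeasurableSet[cylinderEvents (avoiding i)] (A i))
    (hclopen : ∀ i, IsClopen (A i))
    (hνs : ∀ N, (νs N : Measure (FaceArray ι)).real (⋂ i, A i) = 1) :
    ¬ Tendsto (fun N => (μs N : Measure (FaceArray ι)).real (⋂ i, A i)) atTop (𝓝 0) := by
  intro hzero
  have hlim (ρs : ℕ → ProbabilityMeasure (FaceArray ι)) :
      Tendsto ρs (hyperfilter ℕ) (𝓝 ((hyperfilter ℕ).map ρs).lim) :=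
    ((hyperfilter ℕ).map ρs).le_nhds_lim
  have hinter := isClopen_iInter_of_finite hclopen
  have hν := tendsto_nhds_unique (tendsto_measureReal_of_isClopen (hlim νs) hinter)
    (tendsto_const_nhds.congr fun N => (hνs N).symm)
  have hμ := tendsto_nhds_unique (tendsto_measureReal_of_isClopen (hlim μs) hinter)
    (hzero.mono_left Nat.hyperfilter_le_atTop)
  refine (Exchangeable.measureReal_iInter_pos (exchangeable_of_tendsto (hlim μs) hμs)
    (dominatedOff_of_tendsto (hlim μs) (hlim νs) hdom) hA ?_).ne' hμ
  rw [hν]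
  exact one_pos

end ArrayLimits

section Removal

variable {ι : Type*} [Fintype ι] [Nonempty ι] [DecidableEq ι]

theorem exists_faceArray_laws {V : Type*} [Fintype V] [Nonempty V] {D : Finset (ι → V)} {m : ℕ}
    (hline : ∀ i y, {v | update y i v ∈ D}.ncard ≤ m) (hD : IsSimplexClosed D) {δ : ℝ≥0}
    (hδ : 0 < δ) (hcard : δ * (Fintype.card V : ℝ) ^ (Fintype.card ι - 1) < #D) :
    ∃ μ ν : ProbabilityMeasure (FaceArray ι), Exchangeable (μ : Measure (FaceArray ι)) ∧
      DominatedOff (m / δ) (μ : Measure (FaceArray ι)) ν ∧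
      (ν : Measure (FaceArray ι)).real (⋂ i, apexEvent i) = 1 ∧
      (μ : Measure (FaceArray ι)).real (⋂ i, apexEvent i) ≤ m / Fintype.card V := by
  let : MeasurableSpace V := ⊤
  have : DiscreteMeasurableSpace V := ⟨fun _ => trivial⟩
  have hVpos : (0 : ℝ) < Fintype.card V := mod_cast Fintype.card_pos
  have hdensity : δ / Fintype.card V ≤ (vertexLaw ι V).real (edgeEvent D) := by
    rw [vertexLaw_real_edgeEvent, div_le_div_iff₀ hVpos (by positivity),
      ← mul_pow_sub_one Fintype.card_ne_zero, mul_left_comm, mul_comm (#D : ℝ)]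
    gcongr
  have hpos : 0 < (vertexLaw ι V).real (edgeEvent D) := lt_of_lt_of_le (by positivity) hdensity
  have hc : m / Fintype.card V ≤ ((m / δ : ℝ≥0) : ℝ) * (vertexLaw ι V).real (edgeEvent D) :=
    calc (m / Fintype.card V : ℝ)
      _ = ((m / δ : ℝ≥0) : ℝ) * (δ / Fintype.card V) := by
        push_cast
        field_simp
      _ ≤ _ := by gcongr
  have hμ : IsProbabilityMeasure (arrayLaw D) :=
    Measure.isProbabilityMeasure_map (measurable_faceArray D).aemeasurable
  have hcond : IsProbabilityMeasure ((vertexLaw ι V)[|edgeEvent D]) :=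
    ProbabilityTheory.cond_isProbabilityMeasure fun h => hpos.ne' (by simp [measureReal_def, h])
  have hν : IsProbabilityMeasure (edgeArrayLaw D) :=
    Measure.isProbabilityMeasure_map (measurable_faceArray D).aemeasurable
  exact ⟨⟨arrayLaw D, hμ⟩, ⟨edgeArrayLaw D, hν⟩, exchangeable_arrayLaw D,
    dominatedOff_edgeArrayLaw hline hc hpos, edgeArrayLaw_real_iInter_apexEvent hD hpos,
    arrayLaw_real_iInter_apexEvent_le hD hline⟩

theorem exists_forall_card_le_of_isSimplexClosed (m : ℕ) {δ : ℝ≥0} (hδ : 0 < δ) :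
    ∃ N : ℕ, ∀ (V : Type*) [Fintype V], N ≤ Fintype.card V → ∀ D : Finset (ι → V),
      (∀ i y, {v | update y i v ∈ D}.ncard ≤ m) → IsSimplexClosed D →
      #D ≤ δ * (Fintype.card V : ℝ) ^ (Fintype.card ι - 1) := by
  by_contra! hcounter
  have hlaws (N : ℕ) : ∃ μ ν : ProbabilityMeasure (FaceArray ι),
      Exchangeable (μ : Measure (FaceArray ι)) ∧
      DominatedOff (m / δ) (μ : Measure (FaceArray ι)) ν ∧
      (ν : Measure (FaceArray ι)).real (⋂ i, apexEvent i) = 1 ∧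
      (μ : Measure (FaceArray ι)).real (⋂ i, apexEvent i) ≤ m * (1 / (N + 1)) := by
    obtain ⟨V, _, hV, D, hline, hD, hcard⟩ := hcounter (N + 1)
    have : Nonempty V := Fintype.card_pos_iff.1 (by lia)
    obtain ⟨μ, ν, hμ, hdom, hν, hμV⟩ := exists_faceArray_laws hline hD hδ hcard
    refine ⟨μ, ν, hμ, hdom, hν, hμV.trans ?_⟩
    rw [mul_one_div]
    gcongr
    exact_mod_cast hV
  choose μs νs hμs hdom hνs hμle using hlaws
  have hzero : Tendsto (fun N : ℕ => (m : ℝ) * (1 / (N + 1))) atTop (𝓝 0) := by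
    simpa only [mul_zero] using tendsto_one_div_add_atTop_nhds_zero_nat.const_mul (m : ℝ)
  exact not_tendsto_measureReal_iInter_zero hμs hdom measurableSet_apexEvent isClopen_apexEvent hνs
    (squeeze_zero (fun _ => measureReal_nonneg) hμle hzero)

end Removal

section Hypergraph

theorem exists_injective_forall_mem {ι V : Type*} [Fintype ι] [Nonempty V]
    {H : Finset (Finset V)} (hr : ∀ A ∈ H, Fintype.card ι ≤ #A) :
    ∃ t : Finset V → ι → V, ∀ A ∈ H, Injective (t A) ∧ ∀ j, t A j ∈ A := by
  have htuple (A : Finset V) : ∃ x : ι → V, A ∈ H → Injective x ∧ ∀ j, x j ∈ A := by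
    by_cases hA : A ∈ H
    · obtain ⟨f⟩ := Function.Embedding.nonempty_of_card_le (α := ι) (β := A)
        ((hr A hA).trans_eq (Fintype.card_coe A).symm)
      exact ⟨fun j => f j, fun _ => ⟨Subtype.val_injective.comp f.injective, fun j => (f j).2⟩⟩
    · exact ⟨fun _ => Classical.arbitrary V, fun h => absurd h hA⟩
  exact Classical.skolem.1 htuple

variable {V : Type*} [DecidableEq V] {r k e : ℕ} {H S : Finset (Finset V)} {U : Finset V}

theorem card_biUnion_id_le_mul_add (hr : ∀ A ∈ S, #A = r) (hU : ∀ A ∈ S, k ≤ #(A ∩ U)) :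
    #(S.biUnion id) ≤ #S * (r - k) + #U := by
  have hsdiff : S.biUnion id \ U = S.biUnion (· \ U) := by
    ext x
    simp only [Finset.mem_sdiff, mem_biUnion, id]
    tauto
  calc #(S.biUnion id)
    _ ≤ #(S.biUnion (· \ U)) + #U := by
      rw [← hsdiff]
      exact card_le_card_sdiff_add_card
    _ ≤ #S * (r - k) + #U := by
      gcongr
      refine card_biUnion_le_card_mul _ _ _ fun A hA => ?_
      have := card_sdiff_add_card_inter A U
      have := hU A hA
      have := hr A hA
      lia

theorem card_lt_of_gFree (hH : GFree H (e * (r - k) + k + 1) e) (hr : ∀ A ∈ H, #A = r)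
    (hS : S ⊆ H) (hUk : #U ≤ k + 1) (hU : ∀ A ∈ S, k ≤ #(A ∩ U)) : #S < e := by
  by_contra! he
  obtain ⟨S', hS', rfl⟩ := exists_subset_card_eq he
  have hlower := hH S' (hS'.trans hS) rfl
  have hupper :=
    card_biUnion_id_le_mul_add (fun A hA => hr A (hS (hS' hA))) fun A hA => hU A (hS' hA)
  lia

variable {ι : Type*} [Fintype ι]

theorem card_sub_one_le_card_inter_image {A : Finset V} {x c : ι → V} (hx : Injective x)
    (hxA : ∀ j, x j ∈ A) {i : ι} (hxc : Set.EqOn x c {i}ᶜ) :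
    Fintype.card ι - 1 ≤ #(A ∩ univ.image c) := by
  classical
  rw [← card_univ, ← card_erase_of_mem (mem_univ i), ← card_image_of_injective _ hx]
  refine card_le_card (image_subset_iff.2 fun j hj => mem_inter.2 ⟨hxA j, ?_⟩)
  rw [hxc (ne_of_mem_erase hj)]
  exact mem_image_of_mem c (mem_univ j)

variable {t : Finset V → ι → V}

theorem card_lt_of_forall_exists_eqOn (hH : GFree H (e * (r - k) + k + 1) e)
    (hr : ∀ A ∈ H, #A = r) (hι : Fintype.card ι = k + 1)
    (ht : ∀ A ∈ H, Injective (t A) ∧ ∀ j, t A j ∈ A) (hS : S ⊆ H) {c : ι → V}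
    (hSc : ∀ A ∈ S, ∃ i, Set.EqOn (t A) c {i}ᶜ) : #S < e := by
  have hc : #(univ.image c) ≤ k + 1 := hι ▸ card_image_le
  refine card_lt_of_gFree hH hr hS hc fun A hA => ?_
  obtain ⟨i, hi⟩ := hSc A hA
  have hle := card_sub_one_le_card_inter_image (ht A (hS hA)).1 (ht A (hS hA)).2 hi
  rwa [hι, Nat.add_sub_cancel] at hle

theorem ncard_update_mem_image_le [DecidableEq ι]
    (hH : GFree H (e * (r - k) + k + 1) e) (hr : ∀ A ∈ H, #A = r) (hι : Fintype.card ι = k + 1)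
    (ht : ∀ A ∈ H, Injective (t A) ∧ ∀ j, t A j ∈ A) (i : ι) (y : ι → V) :
    {v | update y i v ∈ H.image t}.ncard ≤ e := by
  have hsub : {v | update y i v ∈ H.image t} ⊆
      ↑({A ∈ H | ∀ j ≠ i, t A j = y j}.image (t · i)) := by
    intro v hv
    obtain ⟨A, hA, hAv⟩ := mem_image.1 hv
    refine mem_coe.2 (mem_image.2 ⟨A, mem_filter.2 ⟨hA, fun j hj => ?_⟩, ?_⟩)
    · rw [hAv, update_of_ne hj]
    · rw [hAv, update_self]
  calc {v | update y i v ∈ H.image t}.ncard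
    _ ≤ #({A ∈ H | ∀ j ≠ i, t A j = y j}.image (t · i)) := by
      rw [← Set.ncard_coe_finset]
      exact Set.ncard_le_ncard hsub
    _ ≤ #{A ∈ H | ∀ j ≠ i, t A j = y j} := card_image_le
    _ ≤ e := le_of_lt (card_lt_of_forall_exists_eqOn hH hr hι ht (filter_subset _ _)
      fun _ hA => ⟨i, (mem_filter.1 hA).2⟩)

theorem isSimplexClosed_image (hH : GFree H (e * (r - k) + k + 1) e) (hr : ∀ A ∈ H, #A = r)
    (he : e ≤ k + 1) (hι : Fintype.card ι = k + 1)
    (ht : ∀ A ∈ H, Injective (t A) ∧ ∀ j, t A j ∈ A) : IsSimplexClosed (H.image t) := by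
  intro c hc
  have hedge (i : ι) : ∃ A ∈ H, Set.EqOn (t A) c {i}ᶜ := by
    obtain ⟨_, hx, hxc⟩ := hc i
    obtain ⟨A, hA, rfl⟩ := mem_image.1 hx
    exact ⟨A, hA, hxc⟩
  choose A hA hAc using hedge
  have hlt : #(univ.image A) < e :=
    card_lt_of_forall_exists_eqOn hH hr hι ht (image_subset_iff.2 fun i _ => hA i)
      fun B hB => by
        obtain ⟨i, -, rfl⟩ := mem_image.1 hB
        exact ⟨i, hAc i⟩
  have hninj : ¬ Injective A := fun hinj => by
    rw [card_image_of_injective _ hinj, card_univ, hι] at hlt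
    lia
  obtain ⟨a, b, hab, hne⟩ := not_injective_iff.1 hninj
  refine mem_image.2 ⟨A a, hA a, funext fun j => ?_⟩
  rcases eq_or_ne j a with rfl | hj
  · rw [hab]
    exact hAc b hne
  · exact hAc a hj

theorem card_le_mul_card_image_of_gFree (hH : GFree H (e * (r - k) + k + 1) e)
    (hr : ∀ A ∈ H, #A = r) (hι : Fintype.card ι = k + 1)
    (ht : ∀ A ∈ H, Injective (t A) ∧ ∀ j, t A j ∈ A) : #H ≤ e * #(H.image t) := by
  have : Nonempty ι := Fintype.card_pos_iff.1 (by lia)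
  refine card_le_mul_card_image H e fun x _ => ?_
  refine (card_lt_of_forall_exists_eqOn hH hr hι ht (filter_subset _ _) (c := x)
    fun A hA => ⟨Classical.arbitrary ι, fun j _ => ?_⟩).le
  rw [(mem_filter.1 hA).2]

end Hypergraph

theorem extremalF_le {r n v e m : ℕ} (h : ∀ H : Finset (Finset (Fin n)),
    (∀ A ∈ H, #A = r) → GFree H v e → #H ≤ m) : extremalF r n v e ≤ m :=
  csSup_le' fun _ ⟨H, hr, hH, hcard⟩ => hcard ▸ h H hr hH

end BrownErdosSos

open BrownErdosSos in
theorem brown_erdos_sos_upper_general_s0 (r k e : ℕ) (h1 : k + 1 ≤ r) (h2 : e ≤ k + 1)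
    (ε : ℝ) (hε : 0 < ε) :
    ∃ N : ℕ, ∀ (V : Type*) [Fintype V] [DecidableEq V], N ≤ Fintype.card V →
      ∀ H : Finset (Finset V), (∀ A ∈ H, #A = r) → GFree H (e * (r - k) + k + 1) e →
        (#H : ℝ) ≤ ε * (Fintype.card V : ℝ) ^ k := by
  lift ε to ℝ≥0 using hε.le
  obtain ⟨N, hN⟩ := exists_forall_card_le_of_isSimplexClosed (ι := Fin (k + 1)) e
    (δ := ε / (e + 1)) (div_pos hε (by positivity))
  refine ⟨N + 1, fun V _ _ hV H hr hH => ?_⟩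
  have : Nonempty V := Fintype.card_pos_iff.1 (by lia)
  have hι := Fintype.card_fin (k + 1)
  obtain ⟨t, ht⟩ := exists_injective_forall_mem (ι := Fin (k + 1)) (H := H)
    fun A hA => by rwa [hι, hr A hA]
  have hD := hN V (by lia) (H.image t) (ncard_update_mem_image_le hH hr hι ht)
    (isSimplexClosed_image hH hr h2 hι ht)
  calc (#H : ℝ)
    _ ≤ e * #(H.image t) := mod_cast card_le_mul_card_image_of_gFree hH hr hι ht
    _ ≤ (e + 1) * ((ε / (e + 1) : ℝ≥0) * (Fintype.card V : ℝ) ^ k) := by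
      gcongr
      · exact le_add_of_nonneg_right zero_le_one
      · rwa [hι, Nat.add_sub_cancel] at hD
    _ = ε * (Fintype.card V : ℝ) ^ k := by
      push_cast
      field_simp

theorem brown_erdos_sos_upper (r k e : ℕ) (h1 : k + 1 ≤ r) (h2 : e ≤ k + 1) (h3 : 3 ≤ e)
    (ε : ℝ) (hε : 0 < ε) :
    ∃ N : ℕ, ∀ n : ℕ, N ≤ n →
      (extremalF r n (e * (r - k) + k + 1) e : ℝ) ≤ ε * (n : ℝ) ^ k := by
  obtain ⟨N, hN⟩ := brown_erdos_sos_upper_general_s0 r k e h1 h2 ε hε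
  refine ⟨N, fun n hn => (Nat.le_floor_iff (by positivity)).1 ?_⟩
  exact BrownErdosSos.extremalF_le fun H hr hH => Nat.le_floor <| by
    simpa only [Fintype.card_fin] using hN (Fin n) (by rwa [Fintype.card_fin]) H hr hH
end

section
/- For all integers r, k, e, i with k ≥ 1, i ≥ 0, r ≥ k+i+1 ≥ 2 and binom(k+i+1, k) ≥ e ≥ 3, one has f_r(n, e(r−k)+k+i+1, e) = o(n^k); that is, for every real ε > 0 there exists N such that for all integers n ≥ N, f_r(n, e(r−k)+k+i+1, e) ≤ ε·n^k. -/
open Finset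

/-!
Put `m = k + i + 1`. Suppose that `H` has at least `ε n ^ k` edges, and select from every edge an
`m`-tuple of distinct vertices. Since fewer than `e` edges share `k` given vertices, the set `S` of
the selected tuples is as spread out on every `k` coordinates as a random set of its size. Call `z`
a gluing of `S` if on every set of `k` coordinates it agrees with some tuple of `S`. Were the
`binom(m, k) ≥ e` edges involved all distinct, `e` of them would span at most `m + e (r - k)`
vertices, contradicting freeness; so two of them coincide, and that edge contains `k + 1` entries
of `z`. Hence there are only `O(n ^ k n ^ (m - k - 1)) = O(n ^ (m - 1))` gluings.

A removal lemma, on the other hand, provides at least `c n ^ m` of them. To prove it, sample an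
infinite sequence of vertices for each of the `m` coordinates and colour the array of all tuples
formed from them. The law `Q` of this array is exchangeable, and conditioning the sampled point at
index `0` to lie in `S` gives a law `P` that is dominated by `K Q` on the events of each
`k`-coordinate face. By exchangeability, the faces are conditionally independent given the
lower-dimensional ones, in the sense that the conditional probability of an event of one face given
all the lower ones only depends on the lower ones inside that face. Together with Lévy's upward
theorem, this shows by induction, forgetting the positions with one zero set at a time, that an
intersection of face events that is not null for `P` is not null for `Q`. Compactness of the space
of such pairs `(P, Q)` makes the lower bound uniform.
-/

open MeasureTheory ProbabilityTheory Filter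
open scoped ENNReal NNReal Topology symmDiff

section ConditionalExpectation

variable {Ω Ω' : Type*} {m₁ m₂ m m₀ : MeasurableSpace Ω} {m' m₀' : MeasurableSpace Ω'}
  {μ : Measure Ω} {ν : Measure Ω'}

lemma condExp_comp_measurePreserving [IsFiniteMeasure μ] [IsFiniteMeasure ν] (hm' : m' ≤ m₀')
    {T : Ω → Ω'} (hT : MeasurePreserving T μ ν) {f : Ω' → ℝ} (hf : Integrable f ν) :
    ν[f | m'] ∘ T =ᵐ[μ] μ[f ∘ T | m'.comap T] := by
  have hcomap : m'.comap T ≤ m₀ := (MeasurableSpace.comap_mono hm').trans hT.measurable.comap_le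
  have setIntegral_comp (g : Ω' → ℝ) (hg : Integrable g ν) (s : Set Ω') (hs : MeasurableSet[m'] s) :
      ∫ x in T ⁻¹' s, (g ∘ T) x ∂μ = ∫ y in s, g y ∂ν := by
    rw [← hT.map_eq, setIntegral_map (hm' s hs) (hT.map_eq ▸ hg.1) hT.measurable.aemeasurable]
    rfl
  refine ae_eq_condExp_of_forall_setIntegral_eq hcomap (hT.integrable_comp_of_integrable hf)
    (fun s _ _ ↦ (hT.integrable_comp_of_integrable integrable_condExp).integrableOn) ?_
    (stronglyMeasurable_condExp.comp_measurable
      (Measurable.of_comap_le le_rfl)).aestronglyMeasurable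
  rintro _ ⟨s, hs, rfl⟩ -
  rw [setIntegral_comp _ integrable_condExp s hs, setIntegral_comp f hf s hs,
    setIntegral_condExp hm' hf hs]

lemma condExp_ae_eq_self_of_variance_le [IsProbabilityMeasure μ] (hm : m ≤ m₀) {f : Ω → ℝ}
    (hf : MemLp f 2 μ) (hvar : Var[f; μ] ≤ Var[μ[f | m]; μ]) : μ[f | m] =ᵐ[μ] f := by
  have hint : Integrable (fun ω ↦ (f ω - (μ[f | m]) ω) ^ 2) μ :=
    (hf.sub (hf.condExp one_le_two)).integrable_sq
  have hzero : ∫ ω, (f ω - (μ[f | m]) ω) ^ 2 ∂μ = 0 := by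
    refine le_antisymm ?_ (integral_nonneg fun ω ↦ sq_nonneg _)
    have htotal := integral_condVar_add_variance_condExp hm hf
    have hcond : μ[Var[f; μ | m]] = ∫ ω, (f ω - (μ[f | m]) ω) ^ 2 ∂μ := integral_condExp hm
    linarith
  filter_upwards [(integral_eq_zero_iff_of_nonneg (fun ω ↦ sq_nonneg _) hint).1 hzero] with ω hω
  exact (sub_eq_zero.1 (pow_eq_zero_iff two_ne_zero |>.1 hω)).symm

-- `μ[f | m₂] ∘ T = μ[f | T⁻¹ m₂]` has the variance of `μ[f | m₂]`, although `T⁻¹ m₂ ≤ m₁ ≤ m₂`: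
-- by the law of total variance conditioning `μ[f | m₂]` on `m₁` loses nothing.
lemma condExp_ae_eq_of_comp_eq [IsProbabilityMeasure μ] (h₁₂ : m₁ ≤ m₂) (h₂ : m₂ ≤ m₀)
    {T : Ω → Ω} (hT : MeasurePreserving T μ μ) (hT₁₂ : Measurable[m₁, m₂] T) {f : Ω → ℝ}
    (hf : MemLp f 2 μ) (hfT : f ∘ T = f) : μ[f | m₂] =ᵐ[μ] μ[f | m₁] := by
  have hcomap : m₂.comap T ≤ m₁ := hT₁₂.comap_le
  have tower : μ[μ[f | m₂] | m₁] =ᵐ[μ] μ[f | m₁] := condExp_condExp_of_le h₁₂ h₂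
  have pullback : μ[f | m₂] ∘ T =ᵐ[μ] μ[μ[f | m₁] | m₂.comap T] :=
    calc μ[f | m₂] ∘ T
      _ =ᵐ[μ] μ[f | m₂.comap T] := by
        simpa only [hfT] using condExp_comp_measurePreserving h₂ hT (hf.integrable one_le_two)
      _ =ᵐ[μ] μ[μ[f | m₁] | m₂.comap T] := (condExp_condExp_of_le hcomap (h₁₂.trans h₂)).symm
  have hvar : Var[μ[f | m₂]; μ] ≤ Var[μ[μ[f | m₂] | m₁]; μ] :=
    calc Var[μ[f | m₂]; μ]
      _ = Var[μ[f | m₂] ∘ T; μ] :=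
        (hT.variance_fun_comp integrable_condExp.aemeasurable).symm
      _ = Var[μ[μ[f | m₁] | m₂.comap T]; μ] := variance_congr pullback
      _ ≤ Var[μ[f | m₁]; μ] := by
        rw [← integral_condVar_add_variance_condExp (hcomap.trans (h₁₂.trans h₂))
          (hf.condExp one_le_two)]
        exact le_add_of_nonneg_left
          (integral_nonneg_of_ae (condExp_nonneg (ae_of_all _ fun ω ↦ sq_nonneg _)))
      _ = Var[μ[μ[f | m₂] | m₁]; μ] := (variance_congr tower).symm
  exact ((condExp_ae_eq_self_of_variance_le (h₁₂.trans h₂) (hf.condExp one_le_two) hvar).symm).trans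
    tower

end ConditionalExpectation

section Cylinders

variable {E X : Type*} [MeasurableSpace X] {Δ : Set E}

lemma cylinderEvents_eq_comap_domRestrict :
    cylinderEvents (X := fun _ : E ↦ X) Δ = MeasurableSpace.pi.comap Δ.domRestrict := by
  simp only [cylinderEvents, MeasurableSpace.pi, MeasurableSpace.comap_iSup,
    MeasurableSpace.comap_comp, iSup_subtype]
  rfl

lemma mem_iff_mem_of_eqOn {A : Set (E → X)} (hA : MeasurableSet[cylinderEvents Δ] A)
    {ω ω' : E → X} (h : Set.EqOn ω ω' Δ) : ω ∈ A ↔ ω' ∈ A := by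
  rw [cylinderEvents_eq_comap_domRestrict] at hA
  obtain ⟨B, -, rfl⟩ := hA
  rw [Set.mem_preimage, Set.mem_preimage, Set.domRestrict_eq_domRestrict_iff.2 h]

lemma isClopen_of_measurableSet_cylinderEvents [TopologicalSpace X] [DiscreteTopology X]
    (hΔ : Δ.Finite) {A : Set (E → X)} (hA : MeasurableSet[cylinderEvents Δ] A) : IsClopen A := by
  rw [cylinderEvents_eq_comap_domRestrict] at hA
  obtain ⟨B, -, rfl⟩ := hA
  have := hΔ.to_subtype
  exact (isClopen_discrete B).preimage (by fun_prop)

lemma exists_finset_measure_symmDiff_lt (ρ : Measure (E → X)) [IsFiniteMeasure ρ]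
    {A : Set (E → X)} (hA : MeasurableSet[cylinderEvents Δ] A) {δ : ℝ≥0∞} (hδ : 0 < δ) :
    ∃ F : Finset E, ↑F ⊆ Δ ∧ ∃ A', MeasurableSet[cylinderEvents F] A' ∧ ρ (A' ∆ A) < δ := by
  have hrestrict : Measurable (Δ.domRestrict : (E → X) → Δ → X) :=
    measurable_pi_lambda _ fun e ↦ measurable_pi_apply _
  rw [cylinderEvents_eq_comap_domRestrict] at hA
  obtain ⟨B, hB, rfl⟩ := hA
  obtain ⟨_, hC, hlt⟩ := exists_measure_symmDiff_lt_of_generateFrom_isSetRing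
    (μ := ρ.map Δ.domRestrict) isSetRing_measurableCylinders
    ⟨{Set.univ}, by simp, by simpa using univ_mem_measurableCylinders fun _ : Δ ↦ X, by simp⟩
    generateFrom_measurableCylinders.symm hB hδ
  obtain ⟨F, S, hS, rfl⟩ := (mem_measurableCylinders _).1 hC
  refine ⟨F.map (Function.Embedding.subtype _), by simp, Δ.domRestrict ⁻¹' cylinder F S, ?_, ?_⟩
  · have hF : Measurable[cylinderEvents ↑(F.map (Function.Embedding.subtype (· ∈ Δ)))]
        fun ω : E → X ↦ F.restrict (Δ.domRestrict ω) :=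
      @measurable_pi_lambda _ _ _ (_) _ _ fun e ↦
        measurable_cylinderEvent_apply (mem_map_of_mem _ e.2)
    exact hF hS
  · rwa [Measure.map_apply hrestrict
      ((MeasurableSet.of_mem_measurableCylinders hC).symmDiff hB)] at hlt

/-- The configurations agreeing with `p` on `F`; for finite `F` and countable `X` these are the
atoms of `cylinderEvents F`. -/
def atom (F : Set E) (p : E → X) : Set (E → X) := {ω | Set.EqOn ω p F}

lemma measurableSet_atom [MeasurableSingletonClass X] {F : Set E} (hF : F.Countable) (p : E → X) :
    MeasurableSet[cylinderEvents F] (atom F p) := by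
  have : atom F p = ⋂ e ∈ F, {ω | ω e = p e} := by ext; simp [atom, Set.EqOn]
  rw [this]
  exact MeasurableSet.biInter hF fun e he ↦
    measurable_cylinderEvent_apply he (measurableSet_singleton _)

omit [MeasurableSpace X] in
lemma finite_range_atom [Finite X] {F : Set E} (hF : F.Finite) :
    (Set.range (atom F : (E → X) → Set (E → X))).Finite := by
  have := hF.to_subtype
  refine (Set.finite_range fun q : F → X ↦ {ω : E → X | F.domRestrict ω = q}).subset ?_
  rintro _ ⟨p, rfl⟩
  exact ⟨F.domRestrict p, Set.ext fun ω ↦ Set.domRestrict_eq_domRestrict_iff⟩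

lemma exists_atom_inter_eq (F : Set E) (p : E → X) {A : Set (E → X)}
    (hA : MeasurableSet[cylinderEvents (F ∪ Δ)] A) :
    ∃ H, MeasurableSet[cylinderEvents Δ] H ∧ atom F p ∩ A = atom F p ∩ H := by
  classical
  have hpiece : Measurable[cylinderEvents Δ, cylinderEvents (F ∪ Δ)]
      fun ω : E → X ↦ F.piecewise p ω := by
    refine measurable_cylinderEvents_iff.2 fun e he ↦ ?_
    by_cases heF : e ∈ F
    · simpa only [Set.piecewise_eq_of_mem _ _ _ heF] using measurable_const
    · simpa only [Set.piecewise_eq_of_notMem _ _ _ heF] using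
        measurable_cylinderEvent_apply (he.resolve_left heF)
  refine ⟨_, hpiece hA, Set.ext fun ω ↦ and_congr_right fun hω ↦ ?_⟩
  have : F.piecewise p ω = ω := by
    rw [← Set.eqOn_univ, Set.eqOn_piecewise]
    exact ⟨fun e he ↦ (hω he.2).symm, fun _ _ ↦ rfl⟩
  rw [Set.mem_preimage, this]

end Cylinders

section ConditionalProbability

variable {Ω : Type*} {m m₀ : MeasurableSpace Ω} {μ : Measure Ω} [IsFiniteMeasure μ]

lemma integrable_indicator_one {A : Set Ω} (hA : MeasurableSet A) :
    Integrable (A.indicator fun _ ↦ (1 : ℝ)) μ :=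
  (integrable_const 1).indicator hA

lemma setIntegral_condProb (hm : m ≤ m₀) {A W : Set Ω} (hA : MeasurableSet A)
    (hW : MeasurableSet[m] W) : ∫ ω in W, (μ⟦A | m⟧) ω ∂μ = μ.real (A ∩ W) := by
  rw [setIntegral_condExp hm (integrable_indicator_one hA) hW, setIntegral_indicator hA,
    setIntegral_const, smul_eq_mul, mul_one, Set.inter_comm]

variable (m) in
lemma eLpNorm_condProb_sub_condProb_le {A B : Set Ω}
    (hA : MeasurableSet A) (hB : MeasurableSet B) :
    eLpNorm (μ⟦A | m⟧ - μ⟦B | m⟧) 1 μ ≤ μ (A ∆ B) := by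
  calc eLpNorm (μ⟦A | m⟧ - μ⟦B | m⟧) 1 μ
    _ = eLpNorm (μ[A.indicator (fun _ ↦ (1 : ℝ)) - B.indicator (fun _ ↦ 1) | m]) 1 μ :=
      eLpNorm_congr_ae
        (condExp_sub (integrable_indicator_one hA) (integrable_indicator_one hB) m).symm
    _ ≤ eLpNorm (A.indicator (fun _ ↦ (1 : ℝ)) - B.indicator (fun _ ↦ 1)) 1 μ :=
      eLpNorm_condExp_le_eLpNorm _ le_rfl
    _ = μ (A ∆ B) := by
      rw [eLpNorm_indicator_sub_indicator, eLpNorm_indicator_const (hA.symmDiff hB) one_ne_zero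
        ENNReal.one_ne_top]
      simp

end ConditionalProbability

section Arrays

variable {ι X : Type*} [Fintype ι] [MeasurableSpace X]

/-- The set of coordinates of a position of an `ι`-dimensional array that vanish. -/
def zeroSet (v : ι → ℕ) : Finset ι := {j | v j = 0}

lemma mem_zeroSet {v : ι → ℕ} {j : ι} : j ∈ zeroSet v ↔ v j = 0 := by simp [zeroSet]

/-- The `σ`-algebra of events that depend only on the entries of an array at the positions whose
zero set belongs to `𝒟`. -/
abbrev zeroEvents (𝒟 : Set (Finset ι)) : MeasurableSpace ((ι → ℕ) → X) :=
  cylinderEvents {v | zeroSet v ∈ 𝒟}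

lemma zeroEvents_mono {𝒟 𝒟' : Set (Finset ι)} (h : 𝒟 ⊆ 𝒟') :
    zeroEvents (X := X) 𝒟 ≤ zeroEvents 𝒟' :=
  cylinderEvents_mono fun _ hv ↦ h hv

/-- The law of a random array is exchangeable if it is unchanged when the indices along each
direction are relabelled injectively, independently of the other directions. -/
def Exchangeable (Q : Measure ((ι → ℕ) → X)) : Prop :=
  ∀ τ : ι → ℕ → ℕ, (∀ j, (τ j).Injective) → Q.map (fun ω v ↦ ω (Pi.map τ v)) = Q

/-- An injective relabelling of the indices that avoids `0` and fixes `1, …, M`. -/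
def shiftZero (M a : ℕ) : ℕ := if a = 0 then M + 1 else if a ≤ M then a else a + 1

lemma shiftZero_injective (M : ℕ) : (shiftZero M).Injective := by
  intro a b h
  unfold shiftZero at h
  split_ifs at h <;> omega

lemma shiftZero_ne_zero (M a : ℕ) : shiftZero M a ≠ 0 := by
  unfold shiftZero
  split_ifs <;> omega

variable {Q : Measure ((ι → ℕ) → X)} [IsProbabilityMeasure Q] {𝒟 : Set (Finset ι)} {I : Finset ι}
  {A : Set ((ι → ℕ) → X)}

lemma Exchangeable.condProb_ae_eq_of_finset (hQ : Exchangeable Q) (h𝒟 : IsLowerSet 𝒟)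
    {F : Finset (ι → ℕ)} (hF : ↑F ⊆ {v | zeroSet v ⊆ I}) (hA : MeasurableSet[cylinderEvents F] A) :
    Q⟦A | zeroEvents 𝒟⟧ =ᵐ[Q] Q⟦A | zeroEvents (𝒟 ∩ Set.Iic I)⟧ := by
  classical
  obtain ⟨M, hM⟩ : ∃ M, ∀ v ∈ F, ∀ j, v j ≤ M :=
    ⟨F.sup fun v ↦ univ.sup v, fun v hv j ↦
      (le_sup (f := v) (mem_univ j)).trans (le_sup (f := fun v : ι → ℕ ↦ univ.sup v) hv)⟩
  set τ : ι → ℕ → ℕ := fun j ↦ if j ∈ I then id else shiftZero M with hτ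
  set T : ((ι → ℕ) → X) → (ι → ℕ) → X := fun ω v ↦ ω (Pi.map τ v)
  have τ_apply_eq_zero (j : ι) (a : ℕ) : τ j a = 0 ↔ j ∈ I ∧ a = 0 := by
    by_cases hj : j ∈ I <;> simp [hτ, hj, shiftZero_ne_zero]
  have zeroSet_map (v : ι → ℕ) : zeroSet (Pi.map τ v) = zeroSet v ∩ I := by
    ext j
    rw [mem_inter, mem_zeroSet, mem_zeroSet, Pi.map_apply, τ_apply_eq_zero, and_comm]
  have hT : Measurable[zeroEvents (𝒟 ∩ Set.Iic I), zeroEvents 𝒟] T :=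
    measurable_cylinderEvents_iff.2 fun v hv ↦ measurable_cylinderEvent_apply <| by
      rw [Set.mem_ofPred_eq, zeroSet_map]
      exact ⟨h𝒟 inter_subset_left hv, inter_subset_right⟩
  have map_of_mem (v : ι → ℕ) (hv : v ∈ F) : Pi.map τ v = v := by
    ext j
    by_cases hj : j ∈ I
    · simp [hτ, hj]
    · have : v j ≠ 0 := fun h ↦ hj (hF hv (mem_zeroSet.2 h))
      simp [hτ, hj, shiftZero, this, hM v hv j]
  refine condExp_ae_eq_of_comp_eq (zeroEvents_mono Set.inter_subset_left) cylinderEvents_le_pi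
    (T := T) ⟨by fun_prop, hQ τ fun j ↦ ?_⟩ hT
    ((memLp_const 1).indicator (cylinderEvents_le_pi _ hA)) (funext fun ω ↦ ?_)
  · by_cases hj : j ∈ I <;> simp [hτ, hj, Function.injective_id, shiftZero_injective]
  · have : T ω ∈ A ↔ ω ∈ A := mem_iff_mem_of_eqOn hA fun v hv ↦ congrArg ω (map_of_mem v hv)
    by_cases hω : ω ∈ A <;> simp [this, hω]

-- For finitely many positions this is `condExp_ae_eq_of_comp_eq`; both sides are `L¹`-contractive.
lemma Exchangeable.condProb_ae_eq (hQ : Exchangeable Q) (h𝒟 : IsLowerSet 𝒟)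
    (hA : MeasurableSet[zeroEvents (Set.Iic I)] A) :
    Q⟦A | zeroEvents 𝒟⟧ =ᵐ[Q] Q⟦A | zeroEvents (𝒟 ∩ Set.Iic I)⟧ := by
  have hA₀ := cylinderEvents_le_pi _ hA
  have hint (𝒞 : Set (Finset ι)) (B : Set ((ι → ℕ) → X)) :
      AEStronglyMeasurable (Q⟦B | zeroEvents 𝒞⟧) Q := integrable_condExp.aestronglyMeasurable
  suffices eLpNorm (Q⟦A | zeroEvents 𝒟⟧ - Q⟦A | zeroEvents (𝒟 ∩ Set.Iic I)⟧) 1 Q ≤ 0 by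
    rwa [nonpos_iff_eq_zero, eLpNorm_eq_zero_iff ((hint _ _).sub (hint _ _)) one_ne_zero,
      ← eventuallyEq_iff_sub] at this
  refine ENNReal.le_of_forall_pos_le_add fun δ hδ _ ↦ ?_
  obtain ⟨F, hF, A', hA', hlt⟩ := exists_finset_measure_symmDiff_lt Q hA
    (ENNReal.half_pos (ENNReal.coe_pos.2 hδ).ne')
  have hA'₀ := cylinderEvents_le_pi _ hA'
  calc eLpNorm (Q⟦A | zeroEvents 𝒟⟧ - Q⟦A | zeroEvents (𝒟 ∩ Set.Iic I)⟧) 1 Q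
    _ = eLpNorm ((Q⟦A | zeroEvents 𝒟⟧ - Q⟦A' | zeroEvents 𝒟⟧) +
          (Q⟦A' | zeroEvents (𝒟 ∩ Set.Iic I)⟧ - Q⟦A | zeroEvents (𝒟 ∩ Set.Iic I)⟧)) 1 Q := by
      refine eLpNorm_congr_ae ?_
      filter_upwards [hQ.condProb_ae_eq_of_finset h𝒟 hF hA'] with ω hω
      simp only [Pi.sub_apply, Pi.add_apply, hω]
      ring
    _ ≤ eLpNorm (Q⟦A | zeroEvents 𝒟⟧ - Q⟦A' | zeroEvents 𝒟⟧) 1 Q +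
          eLpNorm (Q⟦A' | zeroEvents (𝒟 ∩ Set.Iic I)⟧ - Q⟦A | zeroEvents (𝒟 ∩ Set.Iic I)⟧) 1 Q :=
      eLpNorm_add_le ((hint _ _).sub (hint _ _)) ((hint _ _).sub (hint _ _)) le_rfl
    _ ≤ Q (A ∆ A') + Q (A' ∆ A) := add_le_add
      (eLpNorm_condProb_sub_condProb_le _ hA₀ hA'₀) (eLpNorm_condProb_sub_condProb_le _ hA'₀ hA₀)
    _ ≤ 0 + δ := by
      rw [symmDiff_comm A A', zero_add, ← ENNReal.add_halves (δ : ℝ≥0∞)]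
      exact add_le_add hlt.le hlt.le

end Arrays

section GoodSet

variable {Ω : Type*} {m m₀ : MeasurableSpace Ω} {μ : Measure Ω} {N A W : Set Ω} {η : ℝ}

lemma integral_lt_integral_of_ae_lt [NeZero μ] {f g : Ω → ℝ} (hf : Integrable f μ)
    (hg : Integrable g μ) (hfg : ∀ᵐ ω ∂μ, f ω < g ω) : ∫ ω, f ω ∂μ < ∫ ω, g ω ∂μ := by
  have hle : f ≤ᵐ[μ] g := hfg.mono fun _ h ↦ h.le
  refine (integral_mono_ae hf hg hle).lt_of_ne fun heq ↦ ?_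
  obtain ⟨ω, hlt, heq⟩ := (hfg.and ((integral_eq_iff_of_ae_le hf hg hle).1 heq)).exists
  exact hlt.ne heq

variable (μ m N A η) in
/-- The event that, given `m`, the event `N` has positive conditional probability and the event
`N \ A` takes up less than the fraction `η` of it. -/
noncomputable def goodSet : Set Ω := {ω | (μ⟦N \ A | m⟧) ω < η * (μ⟦N | m⟧) ω}

lemma measurableSet_goodSet : MeasurableSet[m] (goodSet m μ N A η) :=
  measurableSet_lt (mδ := m) stronglyMeasurable_condExp.measurable
    (stronglyMeasurable_condExp.measurable.const_mul η)

variable [IsFiniteMeasure μ]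

lemma measureReal_lt_of_ae_mem_goodSet (hm : m ≤ m₀) (hN : MeasurableSet N)
    (hA : MeasurableSet A) (hW : MeasurableSet[m] W) (hpos : μ W ≠ 0)
    (hgood : ∀ᵐ ω ∂μ, ω ∈ W → ω ∈ goodSet m μ N A η) :
    μ.real ((N \ A) ∩ W) < η * μ.real (N ∩ W) := by
  have : NeZero (μ.restrict W) := ⟨mt Measure.restrict_eq_zero.1 hpos⟩
  rw [← setIntegral_condProb hm (hN.diff hA) hW, ← setIntegral_condProb hm hN hW,
    ← integral_const_mul]
  exact integral_lt_integral_of_ae_lt integrable_condExp.integrableOn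
    (integrable_condExp.const_mul η).integrableOn ((ae_restrict_iff' (hm _ hW)).2 hgood)

lemma le_measureReal_of_disjoint_goodSet (hm : m ≤ m₀) (hN : MeasurableSet N)
    (hA : MeasurableSet A) (hW : MeasurableSet[m] W) (hbad : Disjoint W (goodSet m μ N A η)) :
    η * μ.real (N ∩ W) ≤ μ.real ((N \ A) ∩ W) := by
  rw [← setIntegral_condProb hm (hN.diff hA) hW, ← setIntegral_condProb hm hN hW,
    ← integral_const_mul]
  exact setIntegral_mono_on (integrable_condExp.const_mul η).integrableOn
    integrable_condExp.integrableOn (hm _ hW)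
    fun ω hω ↦ not_lt.1 (Set.disjoint_left.1 hbad hω)

lemma measureReal_lt_of_condProb_lt (hm : m ≤ m₀) (hA : MeasurableSet A)
    (hW : MeasurableSet[m] W) (hpos : μ W ≠ 0) (hlt : ∀ ω ∈ W, (μ⟦A | m⟧) ω < η) :
    μ.real (A ∩ W) < η * μ.real W := by
  have : NeZero (μ.restrict W) := ⟨mt Measure.restrict_eq_zero.1 hpos⟩
  rw [← setIntegral_condProb hm hA hW, mul_comm, ← smul_eq_mul, ← setIntegral_const]
  exact integral_lt_integral_of_ae_lt integrable_condExp.integrableOn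
    (integrable_const η).integrableOn (ae_restrict_of_forall_mem (hm _ hW) hlt)

end GoodSet

section Levy

variable {E X : Type*} [MeasurableSpace X] [MeasurableSingletonClass X]
  {Q : Measure (E → X)} [IsFiniteMeasure Q] {A : Set (E → X)} {η : ℝ}

lemma ae_mem_goodSet_of_condProb_compl_lt {F : Set E} (hF : F.Countable) (Δ : Set E) (p : E → X)
    (hA : MeasurableSet A) :
    ∀ᵐ ω ∂Q, ω ∈ atom F p → (Q⟦Aᶜ | cylinderEvents (F ∪ Δ)⟧) ω < η →
      ω ∈ goodSet (cylinderEvents Δ) Q (atom F p) A η := by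
  set N := atom F p
  set G := goodSet (cylinderEvents Δ) Q N A η
  have hN : MeasurableSet[cylinderEvents F] N := measurableSet_atom hF p
  have hmeas : Measurable[cylinderEvents (F ∪ Δ)] (Q⟦Aᶜ | cylinderEvents (F ∪ Δ)⟧) :=
    stronglyMeasurable_condExp.measurable
  obtain ⟨H, hH, hNH⟩ := exists_atom_inter_eq F p (hmeas (measurableSet_Iio (a := η)))
  have hHG : MeasurableSet[cylinderEvents Δ] (H \ G) := hH.diff measurableSet_goodSet
  have hbad : Q (N ∩ (H \ G)) = 0 := by
    by_contra hpos
    have hlower := le_measureReal_of_disjoint_goodSet cylinderEvents_le_pi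
      (cylinderEvents_le_pi _ hN) hA hHG Set.disjoint_sdiff_left
    have hupper := measureReal_lt_of_condProb_lt cylinderEvents_le_pi hA.compl
      (MeasurableSet.inter (cylinderEvents_mono Set.subset_union_left _ hN)
        (cylinderEvents_mono Set.subset_union_right _ hHG)) hpos
      fun ω hω ↦ (hNH.ge ⟨hω.1, hω.2.1⟩).2
    rw [← Set.inter_assoc, Set.inter_comm Aᶜ, ← Set.sdiff_eq] at hupper
    exact hlower.not_gt hupper
  filter_upwards [measure_eq_zero_iff_ae_notMem.1 hbad] with ω hω hωN hωη
  by_contra hωG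
  exact hω ⟨hωN, (hNH.le ⟨hωN, hωη⟩).2, hωG⟩

-- By Lévy's upward theorem the conditional probability of `Aᶜ` given `F n` and `Δ` tends to zero
-- almost everywhere on `A`.
lemma ae_eventually_mem_goodSet [Finite X] {F : ℕ → Set E} (hmono : Monotone F)
    (hfin : ∀ n, (F n).Finite) {Δ : Set E} (hη : 0 < η)
    (hA : MeasurableSet[cylinderEvents ((⋃ n, F n) ∪ Δ)] A) :
    ∀ᵐ ω ∂Q, ω ∈ A → ∀ᶠ n in atTop, ω ∈ goodSet (cylinderEvents Δ) Q (atom (F n) ω) A η := by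
  have hA₀ := cylinderEvents_le_pi _ hA
  let ℱ : Filtration ℕ (MeasurableSpace.pi : MeasurableSpace (E → X)) :=
    { seq n := cylinderEvents (F n ∪ Δ)
      mono' _ _ h := cylinderEvents_mono (Set.union_subset_union_left _ (hmono h))
      le' _ := cylinderEvents_le_pi }
  have hsup : cylinderEvents ((⋃ n, F n) ∪ Δ) ≤ ⨆ n, ℱ n := by
    refine iSup₂_le fun e he ↦ ?_
    rw [Set.iUnion_union, Set.mem_iUnion] at he
    obtain ⟨n, hn⟩ := he
    exact (measurable_cylinderEvent_apply hn).comap_le.trans (le_iSup ℱ n)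
  have hlim : Q⟦Aᶜ | ⨆ n, ℱ n⟧ = Aᶜ.indicator fun _ ↦ (1 : ℝ) :=
    condExp_of_stronglyMeasurable (iSup_le ℱ.le)
      (stronglyMeasurable_const.indicator (hsup _ hA.compl)) (integrable_indicator_one hA₀.compl)
  have hstep (n : ℕ) : ∀ᵐ ω ∂Q, (Q⟦Aᶜ | ℱ n⟧) ω < η →
      ω ∈ goodSet (cylinderEvents Δ) Q (atom (F n) ω) A η := by
    have hall : ∀ᵐ ω ∂Q, ∀ N ∈ Set.range (atom (F n)), ω ∈ N → (Q⟦Aᶜ | ℱ n⟧) ω < η →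
        ω ∈ goodSet (cylinderEvents Δ) Q N A η := by
      rw [ae_ball_iff (finite_range_atom (hfin n)).countable]
      rintro _ ⟨p, rfl⟩
      exact ae_mem_goodSet_of_condProb_compl_lt (hfin n).countable Δ p hA₀
    filter_upwards [hall] with ω hω using hω _ ⟨ω, rfl⟩ fun _ _ ↦ rfl
  filter_upwards [tendsto_ae_condExp (ℱ := ℱ) (Aᶜ.indicator fun _ ↦ (1 : ℝ)), ae_all_iff.2 hstep]
    with ω hω hωstep hωA
  rw [hlim, Set.indicator_of_notMem (not_not.2 hωA)] at hω
  exact (hω.eventually_lt_const hη).mono hωstep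

omit [IsFiniteMeasure Q] in
lemma measurableSet_mem_goodSet_atom [Finite X] {F Δ : Set E} (hF : F.Finite) :
    MeasurableSet[cylinderEvents (F ∪ Δ)]
      {ω | ω ∈ goodSet (cylinderEvents Δ) Q (atom F ω) A η} := by
  have : {ω | ω ∈ goodSet (cylinderEvents Δ) Q (atom F ω) A η} =
      ⋃ N ∈ Set.range (atom F), N ∩ goodSet (cylinderEvents Δ) Q N A η := by
    ext ω
    simp only [Set.mem_ofPred_eq, Set.biUnion_range, Set.mem_iUnion, Set.mem_inter_iff]
    refine ⟨fun hω ↦ ⟨ω, fun _ _ ↦ rfl, hω⟩, fun ⟨p, hp, hω⟩ ↦ ?_⟩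
    have : atom F ω = atom F p := Set.ext fun _ ↦ ⟨fun h ↦ h.trans hp, fun h ↦ h.trans hp.symm⟩
    rwa [this]
  rw [this]
  refine (finite_range_atom hF).measurableSet_biUnion ?_
  rintro _ ⟨p, rfl⟩
  exact .inter (cylinderEvents_mono Set.subset_union_left _ (measurableSet_atom hF.countable p))
    (cylinderEvents_mono Set.subset_union_right _ measurableSet_goodSet)

lemma ae_eventually_mem_goodSet_of_absolutelyContinuous [Finite X] {P : Measure (E → X)}
    {F : ℕ → Set E} (hmono : Monotone F) (hfin : ∀ n, (F n).Finite) {Δ : Set E} (hη : 0 < η)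
    (hPQ : ∀ B, MeasurableSet[cylinderEvents ((⋃ n, F n) ∪ Δ)] B → Q B = 0 → P B = 0)
    (hA : MeasurableSet[cylinderEvents ((⋃ n, F n) ∪ Δ)] A) :
    ∀ᵐ ω ∂P, ω ∈ A → ∀ᶠ n in atTop, ω ∈ goodSet (cylinderEvents Δ) Q (atom (F n) ω) A η := by
  set G : ℕ → Set (E → X) := fun n ↦ {ω | ω ∈ goodSet (cylinderEvents Δ) Q (atom (F n) ω) A η}
  have hG (n : ℕ) : MeasurableSet[cylinderEvents ((⋃ n, F n) ∪ Δ)] (G n) :=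
    cylinderEvents_mono (Set.union_subset_union_left _ (Set.subset_iUnion F n)) _
      (measurableSet_mem_goodSet_atom (hfin n))
  have hliminf (ω : E → X) : ω ∈ liminf G atTop ↔ ∀ᶠ n in atTop, ω ∈ G n :=
    mem_liminf_iff_eventually_mem
  have hbad : P (A \ liminf G atTop) = 0 :=
    hPQ _ (hA.diff (@MeasurableSet.measurableSet_liminf _ (cylinderEvents _) _ hG)) <|
      measure_eq_zero_iff_ae_notMem.2 <| (ae_eventually_mem_goodSet hmono hfin hη hA).mono
        fun ω hω hωA ↦ hωA.2 ((hliminf ω).2 (hω hωA.1))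
  filter_upwards [measure_eq_zero_iff_ae_notMem.1 hbad] with ω hω hωA
  by_contra h
  exact hω ⟨hωA, fun hlim ↦ h ((hliminf ω).1 hlim)⟩

end Levy

section Positivity

lemma measure_inter_biInter_ne_zero {Ω κ : Type*} {m m₀ : MeasurableSpace Ω} {μ : Measure Ω}
    [IsFiniteMeasure μ] (hm : m ≤ m₀) {s : Finset κ} {N W : Set Ω} {A : κ → Set Ω}
    {η : ℝ} (hη : #s * η ≤ 1) (hN : MeasurableSet N) (hA : ∀ i ∈ s, MeasurableSet (A i))
    (hW : MeasurableSet[m] W) (hpos : μ W ≠ 0)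
    (hgood : ∀ i ∈ s, ∀ᵐ ω ∂μ, ω ∈ W → ω ∈ goodSet m μ N (A i) η) :
    μ (W ∩ ⋂ i ∈ s, A i) ≠ 0 := by
  obtain rfl | hs := s.eq_empty_or_nonempty
  · simpa using hpos
  intro hzero
  have hcover : N ∩ W ⊆ (W ∩ ⋂ i ∈ s, A i) ∪ ⋃ i ∈ s, (N \ A i) ∩ W := by
    intro ω hω
    by_cases h : ∀ i ∈ s, ω ∈ A i
    · exact .inl ⟨hω.2, Set.mem_iInter₂.2 h⟩
    · push Not at h
      obtain ⟨i, hi, hωi⟩ := h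
      exact .inr (Set.mem_biUnion hi ⟨⟨hω.1, hωi⟩, hω.2⟩)
  have : μ.real (N ∩ W) < μ.real (N ∩ W) :=
    calc μ.real (N ∩ W)
      _ ≤ μ.real ((W ∩ ⋂ i ∈ s, A i) ∪ ⋃ i ∈ s, (N \ A i) ∩ W) := measureReal_mono hcover
      _ ≤ μ.real (W ∩ ⋂ i ∈ s, A i) + μ.real (⋃ i ∈ s, (N \ A i) ∩ W) :=
        measureReal_union_le _ _
      _ = μ.real (⋃ i ∈ s, (N \ A i) ∩ W) := by simp [measureReal_def, hzero]
      _ ≤ ∑ i ∈ s, μ.real ((N \ A i) ∩ W) := measureReal_biUnion_finset_le _ _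
      _ < ∑ _ ∈ s, η * μ.real (N ∩ W) := sum_lt_sum_of_nonempty hs fun i hi ↦
        measureReal_lt_of_ae_mem_goodSet hm hN (hA i hi) hW hpos (hgood i hi)
      _ ≤ μ.real (N ∩ W) := by
        rw [sum_const, nsmul_eq_mul, ← mul_assoc]
        exact mul_le_of_le_one_left measureReal_nonneg hη
  exact this.false

lemma exists_monotone_finite_iUnion_eq {α : Type*} [Countable α] (S : Set α) :
    ∃ F : ℕ → Set α, Monotone F ∧ (∀ n, (F n).Finite) ∧ ⋃ n, F n = S := by
  obtain ⟨f, hf⟩ := exists_injective_nat α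
  refine ⟨fun n ↦ S ∩ f ⁻¹' Set.Iic n, fun m n h v hv ↦ ⟨hv.1, hv.2.trans h⟩,
    fun n ↦ ((Set.finite_Iic n).preimage hf.injOn).inter_of_right S, ?_⟩
  rw [← Set.inter_iUnion, ← Set.preimage_iUnion, Set.iUnion_Iic, Set.preimage_univ, Set.inter_univ]

variable {ι X : Type*} [Fintype ι] [MeasurableSpace X] {P Q : Measure ((ι → ℕ) → X)}
  [IsProbabilityMeasure Q] {𝓘 : Finset (Finset ι)} {𝒟 : Set (Finset ι)}

lemma Exchangeable.mem_goodSet_ae (hQ : Exchangeable Q) (h𝒟 : IsLowerSet 𝒟) {I : Finset ι}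
    {N A : Set ((ι → ℕ) → X)} (hN : MeasurableSet[zeroEvents (Set.Iic I)] N)
    (hA : MeasurableSet[zeroEvents (Set.Iic I)] A) (η : ℝ) :
    ∀ᵐ ω ∂Q, ω ∈ goodSet (zeroEvents (𝒟 ∩ Set.Iic I)) Q N A η →
      ω ∈ goodSet (zeroEvents 𝒟) Q N A η := by
  filter_upwards [hQ.condProb_ae_eq h𝒟 hN, hQ.condProb_ae_eq h𝒟 (hN.diff hA)] with ω hωN hωNA hω
  rwa [goodSet, Set.mem_ofPred_eq, hωN, hωNA]

variable (Q 𝒟) in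
open Classical in
/-- The events that replace the `A I` when the entries at the positions with zero set `J` are
forgotten: only those `A I` that may depend on these entries change. -/
noncomputable def forget (J : Finset ι) (N : Set ((ι → ℕ) → X))
    (A : Finset ι → Set ((ι → ℕ) → X)) (η : ℝ) (I : Finset ι) : Set ((ι → ℕ) → X) :=
  if J ⊆ I then goodSet (zeroEvents (𝒟 ∩ Set.Iic I)) Q N (A I) η else A I

variable {J I : Finset ι} {N : Set ((ι → ℕ) → X)} {A : Finset ι → Set ((ι → ℕ) → X)} {η : ℝ}

omit [IsProbabilityMeasure Q] in
lemma measurableSet_forget (hA : MeasurableSet[zeroEvents (insert J 𝒟 ∩ Set.Iic I)] (A I)) :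
    MeasurableSet[zeroEvents (𝒟 ∩ Set.Iic I)] (forget Q 𝒟 J N A η I) := by
  unfold forget
  split_ifs with hJI
  · exact measurableSet_goodSet
  · rwa [Set.insert_inter_of_notMem hJI] at hA

lemma ae_eventually_mem_forget [MeasurableSingletonClass X] [Finite X] {F : ℕ → Set (ι → ℕ)}
    (hmono : Monotone F) (hfin : ∀ n, (F n).Finite) (hF : ⋃ n, F n = {v | zeroSet v = J})
    (hPQ : ∀ B, MeasurableSet[zeroEvents (Set.Iic I)] B → Q B = 0 → P B = 0)
    (hA : MeasurableSet[zeroEvents (insert J 𝒟 ∩ Set.Iic I)] (A I)) (hη : 0 < η) :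
    ∀ᵐ ω ∂P, ω ∈ A I → ∀ᶠ n in atTop, ω ∈ forget Q 𝒟 J (atom (F n) ω) A η I := by
  by_cases hJI : J ⊆ I
  · have hpos : (⋃ n, F n) ∪ {v | zeroSet v ∈ 𝒟 ∩ Set.Iic I} =
        {v | zeroSet v ∈ insert J 𝒟 ∩ Set.Iic I} := by
      rw [hF, Set.insert_inter_of_mem hJI]
      rfl
    simp only [forget, if_pos hJI]
    refine ae_eventually_mem_goodSet_of_absolutelyContinuous hmono hfin hη (fun B hB ↦ ?_) ?_
    · rw [hpos] at hB
      exact hPQ B (zeroEvents_mono Set.inter_subset_right _ hB)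
    · rwa [hpos]
  · simp only [forget, if_neg hJI]
    exact ae_of_all _ fun ω hω ↦ .of_forall fun _ ↦ hω

lemma exists_atom_measure_ne_zero [MeasurableSingletonClass X] [Finite X]
    (hPQ : ∀ I ∈ 𝓘, ∀ B, MeasurableSet[zeroEvents (Set.Iic I)] B → Q B = 0 → P B = 0)
    (hA : ∀ I ∈ 𝓘, MeasurableSet[zeroEvents (insert J 𝒟 ∩ Set.Iic I)] (A I))
    (hP : P (⋂ I ∈ 𝓘, A I) ≠ 0) (hη : 0 < η) :
    ∃ N, MeasurableSet[zeroEvents {J}] N ∧ P (⋂ I ∈ 𝓘, forget Q 𝒟 J N A η I) ≠ 0 := by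
  obtain ⟨F, hmono, hfin, hF⟩ := exists_monotone_finite_iUnion_eq {v : ι → ℕ | zeroSet v = J}
  have hatom (n : ℕ) (p : (ι → ℕ) → X) : MeasurableSet[zeroEvents {J}] (atom (F n) p) :=
    cylinderEvents_mono (hF ▸ Set.subset_iUnion F n) _ (measurableSet_atom (hfin n).countable p)
  by_contra! hzero
  have hnull : ∀ᵐ ω ∂P, ∀ n, ∀ N ∈ Set.range (atom (F n)),
      ω ∉ ⋂ I ∈ 𝓘, forget Q 𝒟 J N A η I := by
    refine ae_all_iff.2 fun n ↦ (ae_ball_iff (finite_range_atom (hfin n)).countable).2 ?_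
    rintro _ ⟨p, rfl⟩
    exact measure_eq_zero_iff_ae_notMem.1 (hzero _ (hatom n p))
  refine hP (measure_eq_zero_iff_ae_notMem.2 ?_)
  filter_upwards [hnull, (ae_ball_iff 𝓘.countable_toSet).2 fun I hI ↦
    ae_eventually_mem_forget hmono hfin hF (hPQ I hI) (hA I hI) hη] with ω hnull hevent hω
  obtain ⟨n, hn⟩ := ((eventually_all_finset 𝓘).2 fun I hI ↦
    hevent I hI (Set.mem_iInter₂.1 hω I hI)).exists
  exact hnull n _ ⟨ω, rfl⟩ (Set.mem_iInter₂.2 hn)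

lemma Exchangeable.measure_biInter_ne_zero_of_forget (hQ : Exchangeable Q) (h𝒟 : IsLowerSet 𝒟)
    (hN : MeasurableSet[zeroEvents {J}] N)
    (hA : ∀ I ∈ 𝓘, MeasurableSet[zeroEvents (insert J 𝒟 ∩ Set.Iic I)] (A I))
    (hη : ∀ 𝓙 ⊆ 𝓘, #𝓙 * η ≤ 1) (hpos : Q (⋂ I ∈ 𝓘, forget Q 𝒟 J N A η I) ≠ 0) :
    Q (⋂ I ∈ 𝓘, A I) ≠ 0 := by
  classical
  have hA₀ : ∀ I ∈ 𝓘, MeasurableSet[zeroEvents (Set.Iic I)] (A I) :=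
    fun I hI ↦ zeroEvents_mono Set.inter_subset_right _ (hA I hI)
  have hW : MeasurableSet[zeroEvents 𝒟] (⋂ I ∈ 𝓘, forget Q 𝒟 J N A η I) :=
    .biInter 𝓘.countable_toSet fun I hI ↦
      zeroEvents_mono Set.inter_subset_left _ (measurableSet_forget (hA I hI))
  have hgood : ∀ I ∈ {I ∈ 𝓘 | J ⊆ I}, ∀ᵐ ω ∂Q, ω ∈ ⋂ I ∈ 𝓘, forget Q 𝒟 J N A η I →
      ω ∈ goodSet (zeroEvents 𝒟) Q N (A I) η := by
    intro I hI
    obtain ⟨hI, hJI⟩ := mem_filter.1 hI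
    filter_upwards [hQ.mem_goodSet_ae h𝒟 (zeroEvents_mono (by simpa using hJI) _ hN)
      (hA₀ I hI) η] with ω hω hωW
    exact hω (by simpa only [forget, if_pos hJI] using Set.mem_iInter₂.1 hωW I hI)
  refine fun hzero ↦ measure_inter_biInter_ne_zero cylinderEvents_le_pi
    (hη _ (filter_subset _ _)) (cylinderEvents_le_pi _ hN)
    (fun I hI ↦ cylinderEvents_le_pi _ (hA₀ I (mem_filter.1 hI).1)) hW hpos hgood
    (measure_mono_null (fun ω hω ↦ Set.mem_iInter₂.2 fun I hI ↦ ?_) hzero)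
  by_cases hJI : J ⊆ I
  · exact Set.mem_iInter₂.1 hω.2 I (mem_filter.2 ⟨hI, hJI⟩)
  · simpa only [forget, if_neg hJI] using Set.mem_iInter₂.1 hω.1 I hI

theorem Exchangeable.measure_biInter_ne_zero [MeasurableSingletonClass X] [Finite X]
    (hQ : Exchangeable Q)
    (hPQ : ∀ I ∈ 𝓘, ∀ B, MeasurableSet[zeroEvents (Set.Iic I)] B → Q B = 0 → P B = 0)
    (h𝒟 : IsLowerSet 𝒟) (hA : ∀ I ∈ 𝓘, MeasurableSet[zeroEvents (𝒟 ∩ Set.Iic I)] (A I))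
    (hP : P (⋂ I ∈ 𝓘, A I) ≠ 0) : Q (⋂ I ∈ 𝓘, A I) ≠ 0 := by
  induction 𝒟 using WellFoundedLT.induction generalizing A with | ind 𝒟 ih => ?_
  obtain rfl | hne := 𝒟.eq_empty_or_nonempty
  · have zeroEvents_eq (I : Finset ι) : zeroEvents (X := X) (∅ ∩ Set.Iic I) = ⊥ := by
      simp [zeroEvents, cylinderEvents]
    have eq_univ : ∀ I ∈ 𝓘, A I = Set.univ := fun I hI ↦
      (MeasurableSpace.measurableSet_bot_iff.1 (zeroEvents_eq I ▸ hA I hI)).resolve_left fun h ↦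
        hP (measure_mono_null (Set.biInter_subset_of_mem hI) (by simp [h]))
    simp [Set.iInter₂_congr eq_univ]
  obtain ⟨J, hJ⟩ := 𝒟.toFinite.exists_maximal hne
  have h𝒟J : IsLowerSet (𝒟 \ {J}) := h𝒟.erase fun I hI hJI ↦ (hJ.eq_of_le hI hJI).symm
  rw [← Set.insert_sdiff_self_of_mem hJ.prop] at hA
  obtain ⟨N, hN, hPN⟩ :=
    exists_atom_measure_ne_zero hPQ hA hP (η := (#𝓘 + 1 : ℝ)⁻¹) (by positivity)
  refine hQ.measure_biInter_ne_zero_of_forget h𝒟J hN hA (fun 𝓙 h𝓙 ↦ ?_) <|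
    ih _ (Set.sdiff_singleton_ssubset.2 hJ.prop) h𝒟J (fun I hI ↦ measurableSet_forget (hA I hI)) hPN
  have : (#𝓙 : ℝ) ≤ #𝓘 + 1 := by exact_mod_cast (card_le_card h𝓙).trans (Nat.le_succ _)
  exact mul_inv_le_one_of_le₀ this (by positivity)

end Positivity

section Compactness

lemma measure_eq_zero_of_clopen_le {E X : Type*} [TopologicalSpace X] [DiscreteTopology X]
    [MeasurableSpace X] {P Q : Measure (E → X)} [IsFiniteMeasure P] [IsFiniteMeasure Q] {Δ : Set E}
    {K : ℝ≥0} (hPQ : ∀ B, MeasurableSet[cylinderEvents Δ] B → IsClopen B → P B ≤ K * Q B)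
    {A : Set (E → X)} (hA : MeasurableSet[cylinderEvents Δ] A) (hQA : Q A = 0) : P A = 0 := by
  refine le_antisymm (ENNReal.le_of_forall_pos_le_add fun δ hδ _ ↦ ?_) zero_le
  have hK : (K + 1 : ℝ≥0∞) ≠ ∞ := by finiteness
  obtain ⟨F, hF, B, hB, hlt⟩ := exists_finset_measure_symmDiff_lt (P + Q) hA
    (ENNReal.div_pos (ENNReal.coe_pos.2 hδ).ne' hK)
  calc P A
    _ ≤ P B + P (A ∆ B) := tsub_le_iff_left.1 le_measure_symmDiff
    _ ≤ K * Q B + P (A ∆ B) := by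
      gcongr
      exact hPQ B (cylinderEvents_mono hF _ hB)
        (isClopen_of_measurableSet_cylinderEvents F.finite_toSet hB)
    _ ≤ K * (Q A + Q (B ∆ A)) + P (A ∆ B) := by
      gcongr
      exact tsub_le_iff_left.1 le_measure_symmDiff
    _ ≤ (K + 1) * (P + Q) (B ∆ A) := by
      rw [hQA, zero_add, symmDiff_comm A B, add_mul, one_mul, Measure.add_apply]
      gcongr
      · exact le_add_self
      · exact le_self_add
    _ ≤ 0 + δ := by
      rw [zero_add, mul_comm]
      exact ENNReal.mul_le_of_le_div hlt.le

variable {Ω : Type*} [MeasurableSpace Ω] [TopologicalSpace Ω] [OpensMeasurableSpace Ω]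
  [HasOuterApproxClosed Ω]

lemma continuous_probabilityMeasure_apply {B : Set Ω} (hB : IsClopen B) :
    Continuous fun P : ProbabilityMeasure Ω ↦ P B :=
  continuous_iff_continuousAt.2 fun _ ↦
    ProbabilityMeasure.tendsto_measure_of_isClopen_of_tendsto tendsto_id hB

variable {ι X : Type*} [Finite X] [TopologicalSpace X] [DiscreteTopology X]
  [MeasurableSpace X] [BorelSpace X]

lemma isClosed_exchangeable [Finite ι] :
    IsClosed {Q : ProbabilityMeasure ((ι → ℕ) → X) | Exchangeable (Q : Measure ((ι → ℕ) → X))} := by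
  simp only [Exchangeable, Set.ofPred_forall]
  refine isClosed_iInter fun τ ↦ isClosed_iInter fun _ ↦ ?_
  have hcont : Continuous fun (ω : (ι → ℕ) → X) v ↦ ω (Pi.map τ v) := by fun_prop
  convert isClosed_eq (ProbabilityMeasure.continuous_map hcont) continuous_id using 3 with Q
  exact ⟨fun h ↦ Subtype.ext h, fun h ↦ congrArg Subtype.val h⟩

theorem exists_pos_le_measure_biInter [Fintype ι] (𝓘 : Finset (Finset ι))
    {A : Finset ι → Set ((ι → ℕ) → X)} (hA : ∀ I ∈ 𝓘, MeasurableSet[zeroEvents (Set.Iic I)] (A I))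
    (hclopen : ∀ I ∈ 𝓘, IsClopen (A I)) (K : ℝ≥0) :
    ∃ c : ℝ≥0, 0 < c ∧ ∀ (P Q : Measure ((ι → ℕ) → X)) [IsProbabilityMeasure P]
      [IsProbabilityMeasure Q], Exchangeable Q →
      (∀ I ∈ 𝓘, ∀ B, MeasurableSet[zeroEvents (Set.Iic I)] B → P B ≤ K * Q B) →
      P (⋂ I ∈ 𝓘, A I) = 1 → c ≤ Q (⋂ I ∈ 𝓘, A I) := by
  have hE : IsClopen (⋂ I ∈ 𝓘, A I) := isClopen_biInter_finset hclopen
  set 𝒞 : Set (Set ((ι → ℕ) → X)) :=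
    {B | IsClopen B ∧ ∃ I ∈ 𝓘, MeasurableSet[zeroEvents (Set.Iic I)] B}
  set S : Set (ProbabilityMeasure ((ι → ℕ) → X) × ProbabilityMeasure ((ι → ℕ) → X)) :=
    {p | Exchangeable (p.2 : Measure ((ι → ℕ) → X))} ∩ ((⋂ B ∈ 𝒞, {p | p.1 B ≤ K * p.2 B}) ∩
      {p | p.1 (⋂ I ∈ 𝓘, A I) = 1})
  have hS : IsClosed S := by
    refine (isClosed_exchangeable.preimage continuous_snd).inter (.inter ?_ ?_)
    · exact isClosed_biInter fun B hB ↦ isClosed_le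
        ((continuous_probabilityMeasure_apply hB.1).comp continuous_fst)
        (((continuous_probabilityMeasure_apply hB.1).comp continuous_snd).const_mul K)
    · exact isClosed_eq ((continuous_probabilityMeasure_apply hE).comp continuous_fst)
        continuous_const
  have hpos : ∀ p ∈ S, 0 < p.2 (⋂ I ∈ 𝓘, A I) := by
    rintro ⟨P, Q⟩ ⟨hQ, hPQ, hP⟩
    have hPQ₀ : ∀ I ∈ 𝓘, ∀ B, MeasurableSet[zeroEvents (Set.Iic I)] B →
        (Q : Measure _) B = 0 → (P : Measure _) B = 0 := fun I hI B hB ↦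
      measure_eq_zero_of_clopen_le (K := K) (fun C hC hC' ↦ by
        simpa only [ENNReal.coe_mul, ProbabilityMeasure.ennreal_coeFn_eq_coeFn_toMeasure] using
          ENNReal.coe_le_coe.2 (Set.mem_iInter₂.1 hPQ C ⟨hC', I, hI, hC⟩)) hB
    have := hQ.measure_biInter_ne_zero hPQ₀ isLowerSet_univ
      (fun I hI ↦ (Set.univ_inter (Set.Iic I)).symm ▸ hA I hI)
      (mt (ProbabilityMeasure.null_iff_toMeasure_null P _).2 (hP.trans_ne one_ne_zero))
    exact pos_iff_ne_zero.2 (mt (ProbabilityMeasure.null_iff_toMeasure_null Q _).1 this)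
  obtain ⟨c, hc, hcS⟩ := hS.isCompact.exists_forall_le'
    ((continuous_probabilityMeasure_apply hE).comp continuous_snd).continuousOn hpos
  refine ⟨c, hc, fun P Q _ _ hQ hPQ hP ↦ ?_⟩
  let P' : ProbabilityMeasure ((ι → ℕ) → X) := ⟨P, ‹_›⟩
  let Q' : ProbabilityMeasure ((ι → ℕ) → X) := ⟨Q, ‹_›⟩
  have hPQ' : (P', Q') ∈ S := by
    refine ⟨hQ, Set.mem_iInter₂.2 fun B ⟨_, I, hI, hB⟩ ↦ ?_, congrArg ENNReal.toNNReal hP⟩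
    rw [Set.mem_ofPred_eq, ← ENNReal.coe_le_coe, ENNReal.coe_mul]
    simp only [ProbabilityMeasure.ennreal_coeFn_eq_coeFn_toMeasure]
    exact hPQ I hI B hB
  exact (ENNReal.coe_le_coe.2 (hcS _ hPQ')).trans_eq
    (ProbabilityMeasure.ennreal_coeFn_eq_coeFn_toMeasure Q' _)

end Compactness

section Sampling

lemma indep_cylinderEvents_infinitePi {E : Type*} {X : E → Type*} [∀ p, MeasurableSpace (X p)]
    (μ : ∀ p, Measure (X p)) [∀ p, IsProbabilityMeasure (μ p)] {Δ Δ' : Set E}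
    (h : Disjoint Δ Δ') :
    Indep (cylinderEvents Δ) (cylinderEvents Δ') (Measure.infinitePi μ) :=
  indep_iSup_of_disjoint (fun p ↦ (measurable_pi_apply p).comap_le)
    (iIndepFun_infinitePi (X := fun _ ↦ id) fun _ ↦ measurable_id) h

variable {ι V X : Type*} [MeasurableSpace V] [DiscreteMeasurableSpace V] [MeasurableSpace X]

/-- Samples an infinite sequence of independent uniform points of `V` for each index in `ι`. -/
noncomputable def sampleMeasure (ι V : Type*) [MeasurableSpace V] : Measure (ι × ℕ → V) :=
  Measure.infinitePi fun _ ↦ uniformOn Set.univ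

/-- The array of the values of `f` at all tuples of the sampled points `x`. -/
def sampleArray (f : (ι → V) → X) (x : ι × ℕ → V) (v : ι → ℕ) : X :=
  f fun j ↦ x (j, v j)

lemma measurableSet_agree (I : Finset ι) (s : ι → V) :
    MeasurableSet[cylinderEvents {p : ι × ℕ | p.1 ∈ I ∧ p.2 = 0}]
      {x : ι × ℕ → V | ∀ j ∈ I, x (j, 0) = s j} := by
  simp only [Set.ofPred_forall]
  refine I.measurableSet_biInter fun j hj ↦ ?_
  have : Measurable[cylinderEvents {p : ι × ℕ | p.1 ∈ I ∧ p.2 = 0}]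
    fun x : ι × ℕ → V ↦ x (j, 0) := measurable_cylinderEvent_apply ⟨hj, rfl⟩
  exact this (measurableSet_singleton (s j))

lemma measurable_sampleArray [Finite ι] [Finite V] (f : (ι → V) → X) : Measurable (sampleArray f) :=
  measurable_pi_lambda _ fun v ↦ (Measurable.of_discrete (f := f)).comp <|
    measurable_pi_lambda _ fun j ↦ measurable_pi_apply (j, v j)

lemma measurableSet_preimage_sampleArray [Fintype ι] [Finite V] (f : (ι → V) → X)
    {I : Finset ι} {C : Set ((ι → ℕ) → X)} (hC : MeasurableSet[zeroEvents (Set.Iic I)] C) :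
    MeasurableSet[cylinderEvents {p : ι × ℕ | p.2 = 0 → p.1 ∈ I}] (sampleArray f ⁻¹' C) := by
  suffices Measurable[cylinderEvents {p : ι × ℕ | p.2 = 0 → p.1 ∈ I}, zeroEvents (Set.Iic I)]
    (sampleArray f) from this hC
  refine measurable_cylinderEvents_iff.2 fun v hv ↦ ?_
  exact (Measurable.of_discrete (f := f)).comp <| @measurable_pi_lambda _ _ _ (_) _ _ fun j ↦
    measurable_cylinderEvent_apply fun h ↦ hv (mem_zeroSet.2 h)

variable [Nonempty V]

instance isProbabilityMeasure_uniformOn_univ [Finite V] :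
    IsProbabilityMeasure (uniformOn (Set.univ : Set V)) :=
  isProbabilityMeasure_uniformOn Set.finite_univ Set.univ_nonempty

instance isProbabilityMeasure_sampleMeasure [Finite V] :
    IsProbabilityMeasure (sampleMeasure ι V) :=
  inferInstanceAs (IsProbabilityMeasure (Measure.infinitePi _))

lemma exchangeable_map_sampleArray [Finite ι] [Finite V] (f : (ι → V) → X) :
    Exchangeable ((sampleMeasure ι V).map (sampleArray f)) := by
  intro τ hτ
  set σ : ι × ℕ → ι × ℕ := fun p ↦ (p.1, τ p.1 p.2)
  have hσ : σ.Injective := by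
    rintro ⟨j, a⟩ ⟨j', a'⟩ h
    obtain ⟨rfl, h⟩ := Prod.mk.inj h
    exact Prod.ext rfl (hτ j h)
  have hinv : (sampleMeasure ι V).map (fun x p ↦ x (σ p)) = sampleMeasure ι V :=
    Measure.map_infinitePi_infinitePi_of_inj (P := fun _ ↦ uniformOn Set.univ) hσ
  rw [Measure.map_map (by fun_prop) (measurable_sampleArray f)]
  nth_rw 2 [← hinv]
  rw [Measure.map_map (measurable_sampleArray f) (by fun_prop)]
  rfl

variable [Fintype V]

lemma sampleMeasure_agree (I : Finset ι) (s : ι → V) :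
    sampleMeasure ι V {x | ∀ j ∈ I, x (j, 0) = s j} = ((Fintype.card V : ℝ≥0∞) ^ #I)⁻¹ := by
  have heq : {x : ι × ℕ → V | ∀ j ∈ I, x (j, 0) = s j} =
      ((I ×ˢ {0} : Finset (ι × ℕ)) : Set (ι × ℕ)).pi fun p ↦ {s p.1} := by
    ext x
    simp
  rw [heq, sampleMeasure, Measure.infinitePi_pi _ fun _ _ ↦ measurableSet_singleton _]
  simp [uniformOn_univ, ENNReal.inv_pow]

variable [Fintype ι]

lemma sampleMeasure_mem (S : Finset (ι → V)) :
    sampleMeasure ι V {x | (fun j ↦ x (j, 0)) ∈ S} =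
      #S * ((Fintype.card V : ℝ≥0∞) ^ Fintype.card ι)⁻¹ := by
  have heq (s : ι → V) : (fun (x : ι × ℕ → V) j ↦ x (j, 0)) ⁻¹' {s} =
      {x | ∀ j ∈ univ, x (j, 0) = s j} := by
    ext x
    simp [funext_iff]
  have hsum := sum_measure_preimage_singleton (μ := sampleMeasure ι V) S
    (f := fun (x : ι × ℕ → V) j ↦ x (j, 0)) fun s _ ↦ by
      exact measurable_pi_lambda _ (fun j ↦ measurable_pi_apply _) (measurableSet_singleton s)
  simp only [heq, sampleMeasure_agree, sum_const, nsmul_eq_mul, card_univ] at hsum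
  exact hsum.symm

lemma sampleMeasure_mem_ne_zero {S : Finset (ι → V)} (hS : S.Nonempty) :
    sampleMeasure ι V {x | (fun j ↦ x (j, 0)) ∈ S} ≠ 0 := by
  simp [sampleMeasure_mem, hS.ne_empty]

variable [DecidableEq V] {S : Finset (ι → V)} {I : Finset ι} {K : ℝ≥0} {B : Set (ι × ℕ → V)}

lemma sum_sampleMeasure_agree_inter_le
    (hS : ∀ y : I → V, (#{s ∈ S | I.restrict s = y} * Fintype.card V ^ #I : ℝ≥0) ≤ K * #S) :
    ∑ s ∈ S, sampleMeasure ι V ({x | ∀ j ∈ I, x (j, 0) = s j} ∩ B) ≤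
      K * #S * ((Fintype.card V : ℝ≥0∞) ^ #I)⁻¹ * sampleMeasure ι V B := by
  classical
  set ρ : (ι × ℕ → V) → I → V := fun x j ↦ x (j, 0)
  have hρ (y : I → V) : MeasurableSet (ρ ⁻¹' {y}) :=
    measurable_pi_lambda ρ (fun j ↦ measurable_pi_apply _) (measurableSet_singleton y)
  have heq (s : ι → V) : {x : ι × ℕ → V | ∀ j ∈ I, x (j, 0) = s j} = ρ ⁻¹' {I.restrict s} := by
    ext x
    simp [ρ, funext_iff]
  set ν := (sampleMeasure ι V).restrict B with hν
  calc ∑ s ∈ S, sampleMeasure ι V ({x | ∀ j ∈ I, x (j, 0) = s j} ∩ B)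
    _ = ∑ s ∈ S, ν (ρ ⁻¹' {I.restrict s}) := by
      simp only [heq, hν, Measure.restrict_apply (hρ _)]
    _ = ∑ y, #{s ∈ S | I.restrict s = y} * ν (ρ ⁻¹' {y}) := by
      rw [← sum_fiberwise S I.restrict]
      refine sum_congr rfl fun y _ ↦ ?_
      rw [sum_congr rfl fun s hs ↦ by rw [(mem_filter.1 hs).2], sum_const, nsmul_eq_mul]
    _ ≤ ∑ y, K * #S * ((Fintype.card V : ℝ≥0∞) ^ #I)⁻¹ * ν (ρ ⁻¹' {y}) := by
      gcongr with y
      rw [← div_eq_mul_inv, ENNReal.le_div_iff_mul_le (.inl (by simp)) (.inl (by finiteness))]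
      exact_mod_cast hS y
    _ = K * #S * ((Fintype.card V : ℝ≥0∞) ^ #I)⁻¹ * sampleMeasure ι V B := by
      rw [← mul_sum, sum_measure_preimage_singleton _ fun y _ ↦ hρ y, coe_univ, Set.preimage_univ,
        hν, Measure.restrict_apply_univ]

-- The points `x (j, 0)` with `j ∉ I` are independent of `B`.
lemma sampleMeasure_mem_inter_le
    (hS : ∀ y : I → V, (#{s ∈ S | I.restrict s = y} * Fintype.card V ^ #I : ℝ≥0) ≤ K * #S)
    (hB : MeasurableSet[cylinderEvents {p | p.2 = 0 → p.1 ∈ I}] B) :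
    sampleMeasure ι V ({x | (fun j ↦ x (j, 0)) ∈ S} ∩ B) ≤
      K * sampleMeasure ι V {x | (fun j ↦ x (j, 0)) ∈ S} * sampleMeasure ι V B := by
  classical
  have hindep (s : ι → V) :
      sampleMeasure ι V ({x | ∀ j ∈ Iᶜ, x (j, 0) = s j} ∩ ({x | ∀ j ∈ I, x (j, 0) = s j} ∩ B)) =
        ((Fintype.card V : ℝ≥0∞) ^ #Iᶜ)⁻¹ *
          sampleMeasure ι V ({x | ∀ j ∈ I, x (j, 0) = s j} ∩ B) := by
    rw [← sampleMeasure_agree Iᶜ s]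
    refine (Indep_iff _ _ _).1 (indep_cylinderEvents_infinitePi _ ?_) _ _
      (measurableSet_agree Iᶜ s) (.inter (cylinderEvents_mono ?_ _ (measurableSet_agree I s)) hB)
    · exact Set.disjoint_left.2 fun p hp hp' ↦ mem_compl.1 hp.1 (hp' hp.2)
    · exact fun p hp _ ↦ hp.1
  have hsub : {x : ι × ℕ → V | (fun j ↦ x (j, 0)) ∈ S} ∩ B ⊆
      ⋃ s ∈ S, {x | ∀ j ∈ Iᶜ, x (j, 0) = s j} ∩ ({x | ∀ j ∈ I, x (j, 0) = s j} ∩ B) :=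
    fun x ⟨hx, hxB⟩ ↦ Set.mem_iUnion₂.2 ⟨_, hx, fun _ _ ↦ rfl, fun _ _ ↦ rfl, hxB⟩
  calc sampleMeasure ι V ({x | (fun j ↦ x (j, 0)) ∈ S} ∩ B)
    _ ≤ ∑ s ∈ S, sampleMeasure ι V
          ({x | ∀ j ∈ Iᶜ, x (j, 0) = s j} ∩ ({x | ∀ j ∈ I, x (j, 0) = s j} ∩ B)) :=
      (measure_mono hsub).trans (measure_biUnion_finset_le _ _)
    _ ≤ ((Fintype.card V : ℝ≥0∞) ^ #Iᶜ)⁻¹ *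
          (K * #S * ((Fintype.card V : ℝ≥0∞) ^ #I)⁻¹ * sampleMeasure ι V B) := by
      simp only [hindep, ← mul_sum]
      gcongr
      exact sum_sampleMeasure_agree_inter_le hS
    _ = K * sampleMeasure ι V {x | (fun j ↦ x (j, 0)) ∈ S} * sampleMeasure ι V B := by
      rw [sampleMeasure_mem, ← card_add_card_compl I, pow_add,
        ENNReal.mul_inv (.inr (by finiteness)) (.inl (by finiteness))]
      ring

lemma map_cond_sampleMeasure_apply_le
    (hS : ∀ y : I → V, (#{s ∈ S | I.restrict s = y} * Fintype.card V ^ #I : ℝ≥0) ≤ K * #S)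
    (f : (ι → V) → X) {C : Set ((ι → ℕ) → X)} (hC : MeasurableSet[zeroEvents (Set.Iic I)] C) :
    (sampleMeasure ι V)[|{x | (fun j ↦ x (j, 0)) ∈ S}].map (sampleArray f) C ≤
      K * (sampleMeasure ι V).map (sampleArray f) C := by
  have hC₀ := cylinderEvents_le_pi _ hC
  rw [Measure.map_apply (measurable_sampleArray f) hC₀,
    Measure.map_apply (measurable_sampleArray f) hC₀, cond_apply' (measurable_sampleArray f hC₀),
    ← ENNReal.div_eq_inv_mul]
  refine ENNReal.div_le_of_le_mul ?_
  rw [mul_right_comm]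
  exact sampleMeasure_mem_inter_le hS (measurableSet_preimage_sampleArray f hC)

end Sampling

section Removal

variable {ι V : Type*}

/-- The tuples which agree, on every `I ∈ 𝓘`, with some member of `S`. These are the copies of the
pattern `𝓘` that a removal lemma has to destroy. -/
noncomputable def gluings [Fintype ι] [Fintype V] (𝓘 : Finset (Finset ι)) (S : Finset (ι → V)) :
    Finset (ι → V) := by
  classical exact {z | ∀ I ∈ 𝓘, ∃ s ∈ S, ∀ j ∈ I, s j = z j}

lemma mem_gluings [Fintype ι] [Fintype V] {𝓘 : Finset (Finset ι)} {S : Finset (ι → V)}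
    {z : ι → V} : z ∈ gluings 𝓘 S ↔ ∀ I ∈ 𝓘, ∃ s ∈ S, ∀ j ∈ I, s j = z j := by
  simp [gluings]

open Classical in
/-- The colour of a tuple `z` records the index sets on which `z` agrees with some member of
`S`. -/
noncomputable def agreementColour (S : Finset (ι → V)) (z : ι → V) (I : Finset ι) : Bool :=
  decide (∃ s ∈ S, ∀ j ∈ I, s j = z j)

open Classical in
/-- A position in an array whose zero set is `I`. -/
noncomputable def zeroPosition (I : Finset ι) (j : ι) : ℕ :=
  if j ∈ I then 0 else 1

/-- The event that an array has a colour containing `I` at a position with zero set `I`. For a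
sampled array it means that the point `x (·, 0)` agrees on `I` with some member of `S`. -/
def agreementEvent (I : Finset ι) : Set ((ι → ℕ) → Finset ι → Bool) :=
  {ω | ω (zeroPosition I) I = true}

lemma isClopen_agreementEvent (I : Finset ι) : IsClopen (agreementEvent I) :=
  (isClopen_discrete {true}).preimage
    (f := fun ω : (ι → ℕ) → Finset ι → Bool ↦ ω (zeroPosition I) I) (by fun_prop)

variable [Fintype ι]

lemma measurableSet_agreementEvent (I : Finset ι) :
    MeasurableSet[zeroEvents (Set.Iic I)] (agreementEvent I) := by
  have hI : zeroPosition I ∈ {v | zeroSet v ∈ Set.Iic I} := fun j hj ↦ by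
    simpa [zeroPosition] using mem_zeroSet.1 hj
  exact measurable_cylinderEvent_apply (X := fun _ ↦ Finset ι → Bool) hI
    (measurable_pi_apply (X := fun _ ↦ Bool) I (measurableSet_singleton true))

variable {𝓘 : Finset (Finset ι)} {S : Finset (ι → V)}

lemma measurableSet_biInter_agreementEvent : MeasurableSet (⋂ I ∈ 𝓘, agreementEvent I) :=
  𝓘.measurableSet_biInter fun I _ ↦ cylinderEvents_le_pi _ (measurableSet_agreementEvent I)

variable [Fintype V]

lemma preimage_sampleArray_biInter_agreementEvent :
    sampleArray (agreementColour S) ⁻¹' (⋂ I ∈ 𝓘, agreementEvent I) =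
      {x | (fun j ↦ x (j, 0)) ∈ gluings 𝓘 S} := by
  ext x
  simp only [Set.mem_preimage, Set.mem_iInter₂, agreementEvent, Set.mem_ofPred_eq, mem_gluings,
    sampleArray, agreementColour, decide_eq_true_eq]
  refine forall₂_congr fun I _ ↦ exists_congr fun s ↦ and_congr_right fun _ ↦
    forall₂_congr fun j hj ↦ ?_
  rw [zeroPosition, if_pos hj]

variable [MeasurableSpace V] [DiscreteMeasurableSpace V] [Nonempty V]

lemma map_sampleMeasure_biInter_agreementEvent :
    (sampleMeasure ι V).map (sampleArray (agreementColour S)) (⋂ I ∈ 𝓘, agreementEvent I) =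
      #(gluings 𝓘 S) / (Fintype.card V : ℝ≥0∞) ^ Fintype.card ι := by
  rw [Measure.map_apply (measurable_sampleArray _) measurableSet_biInter_agreementEvent,
    preimage_sampleArray_biInter_agreementEvent, sampleMeasure_mem, div_eq_mul_inv]

lemma map_cond_sampleMeasure_biInter_agreementEvent (hS : S.Nonempty) :
    (sampleMeasure ι V)[|{x | (fun j ↦ x (j, 0)) ∈ S}].map (sampleArray (agreementColour S))
      (⋂ I ∈ 𝓘, agreementEvent I) = 1 := by
  have hf := measurable_sampleArray (agreementColour S)
  have hsub : {x : ι × ℕ → V | (fun j ↦ x (j, 0)) ∈ S} ⊆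
      sampleArray (agreementColour S) ⁻¹' (⋂ I ∈ 𝓘, agreementEvent I) := by
    rw [preimage_sampleArray_biInter_agreementEvent]
    exact fun x hx ↦ mem_gluings.2 fun _ _ ↦ ⟨_, hx, fun _ _ ↦ rfl⟩
  rw [Measure.map_apply hf measurableSet_biInter_agreementEvent,
    cond_apply' (hf measurableSet_biInter_agreementEvent), Set.inter_eq_left.2 hsub]
  exact ENNReal.inv_mul_cancel (sampleMeasure_mem_ne_zero hS) (by finiteness)

theorem exists_pos_le_card_gluings (𝓘 : Finset (Finset ι)) (K : ℝ≥0) :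
    ∃ c : ℝ≥0, 0 < c ∧ ∀ (V : Type*) [Fintype V] [DecidableEq V] [Nonempty V] (S : Finset (ι → V)),
      S.Nonempty →
      (∀ I ∈ 𝓘, ∀ y : I → V, (#{s ∈ S | I.restrict s = y} * Fintype.card V ^ #I : ℝ≥0) ≤ K * #S) →
      c * Fintype.card V ^ Fintype.card ι ≤ #(gluings 𝓘 S) := by
  obtain ⟨c, hc, hcQ⟩ := exists_pos_le_measure_biInter 𝓘
    (fun I _ ↦ measurableSet_agreementEvent I) (fun I _ ↦ isClopen_agreementEvent I) K
  refine ⟨c, hc, fun V _ _ _ S hS hSK ↦ ?_⟩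
  let _ : MeasurableSpace V := ⊤
  have := cond_isProbabilityMeasure (sampleMeasure_mem_ne_zero hS)
  have hf := measurable_sampleArray (agreementColour S)
  have hQ := @hcQ _ _ (Measure.isProbabilityMeasure_map hf.aemeasurable)
    (Measure.isProbabilityMeasure_map hf.aemeasurable) (exchangeable_map_sampleArray _)
    (fun I hI B ↦ map_cond_sampleMeasure_apply_le (hSK I hI) (agreementColour S))
    (map_cond_sampleMeasure_biInter_agreementEvent hS)
  rw [map_sampleMeasure_biInter_agreementEvent,
    ENNReal.le_div_iff_mul_le (.inl (by simp)) (.inl (by finiteness))] at hQ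
  exact_mod_cast hQ

end Removal

section Hypergraphs

variable {V : Type*} [DecidableEq V] {H S : Finset (Finset V)} {r v e k : ℕ}

lemma card_biUnion_le_of_le_card_inter (hS : ∀ A ∈ S, #A = r) {T : Finset V}
    (hT : ∀ A ∈ S, k ≤ #(A ∩ T)) : #(S.biUnion id) ≤ #T + #S * (r - k) := by
  have hsub : S.biUnion id ⊆ T ∪ S.biUnion (· \ T) := by
    intro x hx
    obtain ⟨A, hA, hxA⟩ := mem_biUnion.1 hx
    by_cases hxT : x ∈ T
    · exact mem_union_left _ hxT
    · exact mem_union_right _ (mem_biUnion.2 ⟨A, hA, mem_sdiff.2 ⟨hxA, hxT⟩⟩)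
  calc #(S.biUnion id)
    _ ≤ #T + #(S.biUnion (· \ T)) := (card_le_card hsub).trans (card_union_le _ _)
    _ ≤ #T + #S * (r - k) := by
      gcongr
      refine card_biUnion_le_card_mul _ _ _ fun A hA ↦ ?_
      have := card_sdiff_add_card_inter A T
      have := hS A hA
      have := hT A hA
      omega

lemma GFree.card_lt_of_le_card_inter (hH : GFree H v e) (hr : ∀ A ∈ H, #A = r) (hS : S ⊆ H)
    {T : Finset V} (hT : ∀ A ∈ S, k ≤ #(A ∩ T)) (hv : #T + e * (r - k) ≤ v) : #S < e := by
  by_contra! hcard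
  obtain ⟨S', hS', rfl⟩ := exists_subset_card_eq hcard
  have hlow := hH S' (hS'.trans hS) rfl
  have hup := card_biUnion_le_of_le_card_inter (fun A hA ↦ hr A (hS (hS' hA)))
    fun A hA ↦ hT A (hS' hA)
  omega

variable {ι : Type*}

lemma exists_subset_union_card_eq_succ [DecidableEq ι] {I J : Finset ι} (hIJ : I ≠ J) (hI : #I = k)
    (hJ : #J = k) : ∃ U ⊆ I ∪ J, #U = k + 1 := by
  refine exists_subset_card_eq (Nat.succ_le_of_lt (hI ▸ card_lt_card ?_))
  refine subset_union_left.ssubset_of_ne fun h ↦ hIJ (eq_of_subset_of_card_le ?_ ?_).symm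
  · exact union_eq_left.1 h.symm
  · rw [hI, hJ]

/-- `φ` selects from every edge of `H` a tuple of distinct vertices indexed by `ι`. -/
def IsSelection (φ : Finset V → ι → V) (H : Finset (Finset V)) : Prop :=
  ∀ A ∈ H, (φ A).Injective ∧ ∀ j, φ A j ∈ A

omit [DecidableEq V] in
lemma exists_isSelection [Fintype ι] [Nonempty V] (hH : ∀ A ∈ H, Fintype.card ι ≤ #A) :
    ∃ φ : Finset V → ι → V, IsSelection φ H := by
  have (A : Finset V) (hA : A ∈ H) : ∃ s : ι → V, s.Injective ∧ ∀ j, s j ∈ A := by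
    obtain ⟨s⟩ := Function.Embedding.nonempty_of_card_le (α := ι) (β := A) (by simpa using hH A hA)
    exact ⟨fun j ↦ s j, Subtype.val_injective.comp s.injective, fun j ↦ (s j).2⟩
  choose! φ hφ using this
  exact ⟨φ, hφ⟩

lemma IsSelection.card_le_card_inter {φ : Finset V → ι → V} (hφ : IsSelection φ H) {A T : Finset V}
    (hA : A ∈ H) {I : Finset ι} (hI : ∀ j ∈ I, φ A j ∈ T) : #I ≤ #(A ∩ T) :=
  card_le_card_of_injOn (φ A) (fun j hj ↦ mem_inter.2 ⟨(hφ A hA).2 j, hI j hj⟩)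
    (hφ A hA).1.injOn

variable {φ : Finset V → ι → V} {I : Finset ι}

lemma GFree.card_filter_restrict_lt (hH : GFree H v e) (hr : ∀ A ∈ H, #A = r)
    (hφ : IsSelection φ H) (hv : #I + e * (r - #I) ≤ v) (y : I → V) :
    #{A ∈ H | I.restrict (φ A) = y} < e := by
  refine hH.card_lt_of_le_card_inter (k := #I) (T := univ.image y) hr (filter_subset _ _)
    (fun A hA ↦ ?_) ?_
  · obtain ⟨hAH, rfl⟩ := mem_filter.1 hA
    exact hφ.card_le_card_inter hAH fun j hj ↦ mem_image.2 ⟨⟨j, hj⟩, mem_univ _, rfl⟩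
  · have : #(univ.image y) ≤ #I := by simpa using card_image_le (s := univ) (f := y)
    omega

lemma GFree.card_le_mul_card_image [Fintype ι] (hH : GFree H v e) (hr : ∀ A ∈ H, #A = r)
    (hφ : IsSelection φ H) (hv : #I + e * (r - #I) ≤ v) : #H ≤ e * #(H.image φ) := by
  refine Finset.card_le_mul_card_image H e fun s _ ↦
    (card_le_card ?_).trans (hH.card_filter_restrict_lt hr hφ hv (I.restrict s)).le
  exact monotone_filter_right H fun A _ hA ↦ congrArg I.restrict hA

variable [Fintype V]

lemma GFree.card_le_mul_pow (hH : GFree H v e) (hr : ∀ A ∈ H, #A = r) (hφ : IsSelection φ H)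
    (hv : #I + e * (r - #I) ≤ v) : #H ≤ e * Fintype.card V ^ #I := by
  classical
  have := card_le_mul_card_image_of_maps_to (t := univ) (fun A _ ↦ mem_univ (I.restrict (φ A))) e
    fun y _ ↦ (hH.card_filter_restrict_lt hr hφ hv y).le
  simpa using this

variable [Fintype ι]

lemma GFree.exists_agree_of_mem_gluings (hH : GFree H v e) (hr : ∀ A ∈ H, #A = r)
    (hφ : IsSelection φ H) (he : e ≤ (Fintype.card ι).choose k)
    (hv : Fintype.card ι + e * (r - k) ≤ v) {z : ι → V}
    (hz : z ∈ gluings (powersetCard k univ) (H.image φ)) :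
    ∃ A ∈ H, ∃ U ∈ powersetCard (k + 1) univ, ∀ j ∈ U, φ A j = z j := by
  classical
  have hz' (I : Finset ι) (hI : I ∈ powersetCard k univ) : ∃ A ∈ H, ∀ j ∈ I, φ A j = z j := by
    simpa using mem_gluings.1 hz I hI
  have : Nonempty (Finset V) := ⟨∅⟩
  choose! f hf hfz using hz'
  have hlt : #((powersetCard k univ).image f) < e := by
    refine hH.card_lt_of_le_card_inter (T := univ.image z) hr (image_subset_iff.2 hf) ?_
      ((Nat.add_le_add_right card_image_le _).trans hv)
    refine forall_mem_image.2 fun I hI ↦ ?_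
    rw [← (mem_powersetCard.1 hI).2]
    exact hφ.card_le_card_inter (hf I hI) fun j hj ↦
      hfz I hI j hj ▸ mem_image_of_mem z (mem_univ j)
  obtain ⟨I, hI, J, hJ, hIJ, hfIJ⟩ := exists_ne_map_eq_of_card_lt_of_maps_to
    (hlt.trans_le (by rwa [card_powersetCard, card_univ])) fun I ↦ mem_image_of_mem f
  obtain ⟨U, hU, hUcard⟩ := exists_subset_union_card_eq_succ hIJ (mem_powersetCard.1 hI).2
    (mem_powersetCard.1 hJ).2
  refine ⟨f I, hf I hI, U, mem_powersetCard.2 ⟨subset_univ U, hUcard⟩, fun j hj ↦ ?_⟩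
  rcases mem_union.1 (hU hj) with hj | hj
  · exact hfz I hI j hj
  · exact hfIJ ▸ hfz J hJ j hj

lemma card_filter_agree [DecidableEq ι] (U : Finset ι) (s : ι → V) :
    #{z : ι → V | ∀ j ∈ U, s j = z j} = Fintype.card V ^ (Fintype.card ι - #U) := by
  have heq : ({z : ι → V | ∀ j ∈ U, s j = z j} : Finset (ι → V)) =
      Fintype.piFinset fun j ↦ if j ∈ U then {s j} else univ := by
    ext z
    simp only [mem_filter_univ, Fintype.mem_piFinset]
    refine forall_congr' fun j ↦ ?_
    by_cases hj : j ∈ U <;> simp [hj, eq_comm]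
  simp [heq, apply_ite card, prod_ite, filter_notMem_eq_sdiff, ← compl_eq_univ_sdiff, card_compl]

lemma GFree.card_gluings_le (hH : GFree H v e) (hr : ∀ A ∈ H, #A = r)
    (hφ : IsSelection φ H) (he : e ≤ (Fintype.card ι).choose k)
    (hv : Fintype.card ι + e * (r - k) ≤ v) :
    #(gluings (powersetCard k univ) (H.image φ)) ≤
      #H * ((Fintype.card ι).choose (k + 1) * Fintype.card V ^ (Fintype.card ι - (k + 1))) := by
  classical
  have hsub : gluings (powersetCard k univ) (H.image φ) ⊆ H.biUnion fun A ↦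
      (powersetCard (k + 1) univ).biUnion fun U ↦ {z : ι → V | ∀ j ∈ U, φ A j = z j} := by
    intro z hz
    simpa only [mem_biUnion, mem_filter_univ] using
      hH.exists_agree_of_mem_gluings hr hφ he hv hz
  refine (card_le_card hsub).trans (card_biUnion_le_card_mul _ _ _ fun A _ ↦ ?_)
  rw [← card_univ, ← card_powersetCard]
  refine card_biUnion_le_card_mul _ _ _ fun U hU ↦ ?_
  rw [card_filter_agree, (mem_powersetCard.1 hU).2, card_univ]

lemma GFree.card_filter_image_mul_le (hH : GFree H v e) (hr : ∀ A ∈ H, #A = r)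
    (hφ : IsSelection φ H) (hv : #I + e * (r - #I) ≤ v) {ε : ℝ≥0} (hε : 0 < ε)
    (hcard : ε * (Fintype.card V : ℝ≥0) ^ #I ≤ #H) (y : I → V) :
    (#{s ∈ H.image φ | I.restrict s = y} * Fintype.card V ^ #I : ℝ≥0) ≤
      e ^ 2 / ε * #(H.image φ) := by
  have hfibre : #{s ∈ H.image φ | I.restrict s = y} ≤ e := by
    rw [filter_image]
    exact card_image_le.trans (hH.card_filter_restrict_lt hr hφ hv y).le
  have hpow : (Fintype.card V : ℝ≥0) ^ #I ≤ #H / ε := by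
    rwa [le_div_iff₀' hε]
  calc (#{s ∈ H.image φ | I.restrict s = y} * Fintype.card V ^ #I : ℝ≥0)
    _ ≤ e * ((e * #(H.image φ) : ℕ) / ε) := by
      gcongr
      exact hpow.trans (by gcongr; exact hH.card_le_mul_card_image hr hφ hv)
    _ = e ^ 2 / ε * #(H.image φ) := by
      push_cast
      ring

lemma GFree.mul_card_le_of_le_card_gluings [Nonempty V] (hH : GFree H v e)
    (hr : ∀ A ∈ H, #A = r) (hφ : IsSelection φ H) (hk : k < Fintype.card ι)
    (he : e ≤ (Fintype.card ι).choose k) (hv : Fintype.card ι + e * (r - k) ≤ v) {c : ℝ≥0}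
    (hc : c * Fintype.card V ^ Fintype.card ι ≤ #(gluings (powersetCard k univ) (H.image φ))) :
    c * Fintype.card V ≤ e * (Fintype.card ι).choose (k + 1) := by
  set n := Fintype.card V
  obtain ⟨d, hd⟩ := Nat.exists_eq_add_of_le (Nat.succ_le_of_lt hk)
  obtain ⟨I, -, rfl⟩ := exists_subset_card_eq (s := (univ : Finset ι)) hk.le
  have hupper := hH.card_le_mul_pow hr hφ (show #I + e * (r - #I) ≤ v by lia)
  have hgluings := hH.card_gluings_le hr hφ he hv
  rw [hd] at hc hgluings ⊢
  rw [Nat.add_sub_cancel_left] at hgluings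
  have hn : (0 : ℝ≥0) < n := by exact_mod_cast Fintype.card_pos
  refine le_of_mul_le_mul_right ?_ (pow_pos hn (#I + d))
  calc c * n * (n : ℝ≥0) ^ (#I + d)
    _ = c * n ^ (#I + 1 + d) := by ring
    _ ≤ #H * ((#I + 1 + d).choose (#I + 1) * n ^ d) := hc.trans (by exact_mod_cast hgluings)
    _ ≤ (e * n ^ #I) * ((#I + 1 + d).choose (#I + 1) * n ^ d) := by
      gcongr
      exact_mod_cast hupper
    _ = e * (#I + 1 + d).choose (#I + 1) * n ^ (#I + d) := by ring

theorem exists_forall_card_le_mul_pow (hk : k < Fintype.card ι) (hr : Fintype.card ι ≤ r)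
    (he : e ≤ (Fintype.card ι).choose k) (hv : Fintype.card ι + e * (r - k) ≤ v) {ε : ℝ≥0}
    (hε : 0 < ε) :
    ∃ N : ℕ, ∀ (V : Type*) [Fintype V] [DecidableEq V], N ≤ Fintype.card V →
      ∀ H : Finset (Finset V), (∀ A ∈ H, #A = r) → GFree H v e →
        #H ≤ ε * (Fintype.card V : ℝ≥0) ^ k := by
  classical
  obtain ⟨c, hc, hgluings⟩ :=
    exists_pos_le_card_gluings (powersetCard k (univ : Finset ι)) (e ^ 2 / ε)
  obtain ⟨N, hN⟩ := exists_nat_gt (e * (Fintype.card ι).choose (k + 1) / c)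
  refine ⟨N + 1, fun V _ _ hNV H hHr hH ↦ ?_⟩
  by_contra! hcard
  have : Nonempty V := Fintype.card_pos_iff.1 (by lia)
  have hHne : H.Nonempty := card_pos.1 (by exact_mod_cast zero_le.trans_lt hcard)
  obtain ⟨φ, hφ⟩ := exists_isSelection (ι := ι) fun A hA ↦ (hHr A hA).symm ▸ hr
  have hmany := hgluings V (H.image φ) (hHne.image φ) fun I hI ↦ by
    obtain ⟨-, rfl⟩ := mem_powersetCard.1 hI
    exact hH.card_filter_image_mul_le hHr hφ (by lia) hε hcard.le
  have hNn : (N : ℝ≥0) ≤ Fintype.card V := by exact_mod_cast (Nat.le_succ N).trans hNV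
  exact ((div_lt_iff₀' hc).1 (hN.trans_le hNn)).not_ge
    (hH.mul_card_le_of_le_card_gluings hHr hφ hk he hv hmany)

end Hypergraphs

lemma extremalF_le {r n v e M : ℕ}
    (hM : ∀ H : Finset (Finset (Fin n)), (∀ A ∈ H, #A = r) → GFree H v e → #H ≤ M) :
    extremalF r n v e ≤ M :=
  csSup_le' fun _ ⟨H, hr, hH, hcard⟩ ↦ hcard ▸ hM H hr hH

theorem brown_erdos_sos_upper_general (r k e i : ℕ) (hk : 1 ≤ k)
    (h1 : k + i + 1 ≤ r) (h2 : e ≤ (k + i + 1).choose k) (h3 : 3 ≤ e)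
    (ε : ℝ) (hε : 0 < ε) :
    ∃ N : ℕ, ∀ n : ℕ, N ≤ n →
      (extremalF r n (e * (r - k) + k + i + 1) e : ℝ) ≤ ε * (n : ℝ) ^ k := by
  lift ε to ℝ≥0 using hε.le
  obtain ⟨N, hN⟩ := exists_forall_card_le_mul_pow (ι := Fin (k + i + 1)) (k := k) (r := r)
    (e := e) (v := e * (r - k) + k + i + 1) (by simp [add_assoc]) (by simpa) (by simpa)
    (by simp; lia) (ε := ε) (by exact_mod_cast hε)
  refine ⟨N, fun n hn ↦ ?_⟩
  have hfloor : extremalF r n (e * (r - k) + k + i + 1) e ≤ ⌊ε * (n : ℝ≥0) ^ k⌋₊ :=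
    extremalF_le fun H hr hH ↦ Nat.le_floor <| by simpa using hN (Fin n) (by simpa) H hr hH
  exact_mod_cast (Nat.le_floor_iff zero_le).1 hfloor
end
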